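/- arXiv:1312.5473 — 2 statements merged into one kernel-verified Lean document; each statement's English description precedes it below -/
import Mathlib

section
/- Local Poincaré inequality: there exists C_PI ∈ (0,∞), depending only on d, C_reg and C_riso, such that for every choice of edge weights ω, every x₀ ∈ V, every n ≥ 1 and every u : V → ℝ, writing B(n) := B(x₀,n), one has ‖u − (u)_{B(n)}‖²_{2,B(n)} ≤ C_PI · ‖ν^ω‖_{d/2,B(n)} · (n²/|B(n)|) · Σ_{x,y∈B(n), x∼y} ω(x,y)·(u(x)−u(y))². -/
open Finset MeasureTheory
open scoped ENNReal

noncomputable section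

namespace RCM

variable {V : Type*}

/-- `μ^ω(x)`, the sum of the weights of edges incident to `x`. -/
def mu (nbr : V → Finset V) (ω : V → V → ℝ) (x : V) : ℝ := ∑ y ∈ nbr x, ω x y

/-- `ν^ω(x)`, the sum of the reciprocals of the weights of edges incident to `x`. -/
def nu (nbr : V → Finset V) (ω : V → V → ℝ) (x : V) : ℝ := ∑ y ∈ nbr x, (ω x y)⁻¹

/-- `(L_Y^ω f)(x)`. -/
def lap (nbr : V → Finset V) (ω : V → V → ℝ) (f : V → ℝ) (x : V) : ℝ :=
  (mu nbr ω x)⁻¹ * ∑ y ∈ nbr x, ω x y * (f y - f x)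

/-- space-averaged norm `‖f‖_{p,A}` for a real exponent `p`. -/
def nrm (A : Finset V) (p : ℝ) (f : V → ℝ) : ℝ :=
  ((A.card : ℝ)⁻¹ * ∑ x ∈ A, |f x| ^ p) ^ (1 / p)

/-- weighted space-averaged norm `‖f‖_{p,A,φ}` for a real exponent `p`. -/
def nrmW (A : Finset V) (p : ℝ) (φ : V → ℝ) (f : V → ℝ) : ℝ :=
  ((A.card : ℝ)⁻¹ * ∑ x ∈ A, |f x| ^ p * φ x) ^ (1 / p)

/-- space-averaged norm `‖f‖_{p,A}` for an extended exponent `p ∈ (0,∞]`;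
for `p = ∞` this is the maximum of `|f|` over `A`. -/
def nrmE (A : Finset V) (p : ℝ≥0∞) (f : V → ℝ) : ℝ :=
  if p = ⊤ then sSup ((fun x => |f x|) '' (A : Set V)) else nrm A p.toReal f

/-- weighted average `(u)_{A,π}`. -/
def wavg (A : Finset V) (π : V → ℝ) (u : V → ℝ) : ℝ :=
  (∑ x ∈ A, π x * u x) / ∑ x ∈ A, π x

open Classical in
/-- relative internal boundary `∂_B A`. -/
def relBdry (G : SimpleGraph V) (B A : Finset V) : Finset V :=
  A.filter fun z => ∃ y ∈ B, y ∉ A ∧ G.Adj z y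

open Classical in
/-- internal boundary `∂B`. -/
def intBdry (G : SimpleGraph V) (B : Finset V) : Finset V :=
  B.filter fun z => ∃ y, y ∉ B ∧ G.Adj z y

open Classical in
/-- Dirichlet sum `Σ_{x,y ∈ B, x∼y} ω(x,y) (u(x)-u(y))²`. -/
def dSum (G : SimpleGraph V) (ω : V → V → ℝ) (B : Finset V) (u : V → ℝ) : ℝ :=
  ∑ x ∈ B, ∑ y ∈ B, if G.Adj x y then ω x y * (u x - u y) ^ 2 else 0

/-- `E^ω_{η²}(u) = (1/2) Σ_{x,y} η(x)² ω(x,y) (u(y)-u(x))²`. -/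
def energySq (ω : V → V → ℝ) (η u : V → ℝ) : ℝ :=
  (1 / 2) * ∑' x, ∑' y, η x ^ 2 * ω x y * (u y - u x) ^ 2

/-- `E^{ω,η}(u) = (1/2) Σ_{x,y} min(η(x)²,η(y)²) ω(x,y) (u(y)-u(x))²`. -/
def energyMin (ω : V → V → ℝ) (η u : V → ℝ) : ℝ :=
  (1 / 2) * ∑' x, ∑' y, min (η x ^ 2) (η y ^ 2) * ω x y * (u y - u x) ^ 2

/-- `‖∇η‖_{ℓ∞(E)}`, the supremum of `|η(y)-η(x)|` over edges `{x,y}`. -/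
def gradSup (G : SimpleGraph V) (η : V → ℝ) : ℝ :=
  sSup {r : ℝ | ∃ x y, G.Adj x y ∧ r = |η y - η x|}

/-- `u` is caloric on `I × B`: `∂_t u = L_Y^ω u` on `I × B`. -/
def Caloric (nbr : V → Finset V) (ω : V → V → ℝ) (I : Set ℝ) (B : Set V)
    (u : ℝ → V → ℝ) : Prop :=
  ∀ x ∈ B, ∀ t ∈ I, HasDerivAt (fun s => u s x) (lap nbr ω (u t) x) t

/-- `u` is sub-caloric on `I × B`: `∂_t u ≤ L_Y^ω u` on `I × B`. -/
def SubCaloric (nbr : V → Finset V) (ω : V → V → ℝ) (I : Set ℝ) (B : Set V)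
    (u : ℝ → V → ℝ) : Prop :=
  ∀ x ∈ B, ∀ t ∈ I, ∃ d, HasDerivAt (fun s => u s x) d t ∧ d ≤ lap nbr ω (u t) x

/-- `u` is super-caloric on `I × B`: `∂_t u ≥ L_Y^ω u` on `I × B`. -/
def SuperCaloric (nbr : V → Finset V) (ω : V → V → ℝ) (I : Set ℝ) (B : Set V)
    (u : ℝ → V → ℝ) : Prop :=
  ∀ x ∈ B, ∀ t ∈ I, ∃ d, HasDerivAt (fun s => u s x) d t ∧ lap nbr ω (u t) x ≤ d

/-- space-time norm `‖u‖_{p,[a,b]×B,φ}`. -/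
def nrmST (a b : ℝ) (B : Finset V) (p : ℝ) (φ : V → ℝ) (u : ℝ → V → ℝ) : ℝ :=
  ((b - a)⁻¹ * ∫ t in a..b, nrmW B p φ (u t) ^ p) ^ (1 / p)

end RCM

/-!
The relative isoperimetric inequality and volume regularity together yield the isoperimetric
inequality of dimension `d` for sets `A` of at most half the volume of a ball `B`: around each point
of `A`, grow balls inside `B` up to the first one that `A` fills at most half. There the relative
inequality bounds the boundary of `A` below by a multiple of (radius)^(d-1), and a Vitali covering
by such balls adds up these bounds. Peeling off level sets turns this into an `ℓ¹` Sobolev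
inequality for nonnegative functions supported on at most half of `B`. Applied to `g^(2(1-1/d))`,
with the gradient estimated by the Cauchy–Schwarz inequality against the weights `ω` and by Hölder's
inequality against `ν^ω ∈ ℓ^(d/2)`, it gives the `ℓ²` bound for such `g`. The two parts of `u` above
and below a median are of this kind.
-/

namespace RCM

/-! ### Inequalities for finite sums and real powers -/

lemma rpow_sum_le_sum_rpow {ι : Type*} (s : Finset ι) {a : ι → ℝ} (ha : ∀ i ∈ s, 0 ≤ a i)
    {θ : ℝ} (h0 : 0 < θ) (h1 : θ ≤ 1) : (∑ i ∈ s, a i) ^ θ ≤ ∑ i ∈ s, a i ^ θ :=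
  le_sum_of_subadditive_on_pred (fun x : ℝ => x ^ θ) (fun x => 0 ≤ x)
    (by simp [Real.zero_rpow h0.ne'])
    (fun _ _ hx hy => Real.rpow_add_le_add_rpow hx hy h0.le h1)
    (fun _ _ hx hy => add_nonneg hx hy) a ha

lemma rpow_sub_rpow_le {a b α : ℝ} (hb : 0 ≤ b) (hba : b ≤ a) (hα : 1 ≤ α) :
    a ^ α - b ^ α ≤ α * (a - b) * a ^ (α - 1) := by
  rcases hba.eq_or_lt with rfl | hlt
  · simp
  have hslope := (convexOn_rpow hα).slope_le_of_hasDerivAt hb (hb.trans hba) hlt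
    (Real.hasDerivAt_rpow_const (Or.inr hα))
  rw [slope_def_field, div_le_iff₀ (sub_pos.2 hlt)] at hslope
  linarith

lemma abs_rpow_sub_rpow_le {a b α : ℝ} (ha : 0 ≤ a) (hb : 0 ≤ b) (hα : 1 ≤ α) :
    |a ^ α - b ^ α| ≤ α * |a - b| * (a ^ (α - 1) + b ^ (α - 1)) := by
  wlog hba : b ≤ a generalizing a b
  · rw [abs_sub_comm, abs_sub_comm a, add_comm]
    exact this hb ha (le_of_not_ge hba)
  rw [abs_of_nonneg (sub_nonneg.2 (Real.rpow_le_rpow hb hba (by linarith))),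
    abs_of_nonneg (sub_nonneg.2 hba)]
  refine (rpow_sub_rpow_le hb hba hα).trans (mul_le_mul_of_nonneg_left ?_ ?_)
  · exact le_add_of_nonneg_right (Real.rpow_nonneg hb _)
  · exact mul_nonneg (by linarith) (sub_nonneg.2 hba)

lemma sum_mul_rpow_one_sub_inv_le {ι : Type*} (s : Finset ι) {p : ℝ} (hp : 1 ≤ p) {f g : ι → ℝ}
    (hf : ∀ i ∈ s, 0 ≤ f i) (hg : ∀ i ∈ s, 0 ≤ g i) :
    ∑ i ∈ s, f i * g i ^ (1 - p⁻¹) ≤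
      (∑ i ∈ s, f i ^ p) ^ p⁻¹ * (∑ i ∈ s, g i) ^ (1 - p⁻¹) := by
  rcases hp.eq_or_lt with rfl | hp1
  · simp
  have hpq := Real.HolderConjugate.conjExponent hp1
  have hholder := Real.inner_le_Lp_mul_Lq_of_nonneg s hpq hf
    fun i hi => Real.rpow_nonneg (hg i hi) (1 - p⁻¹)
  have hpow : ∀ i ∈ s, (g i ^ (1 - p⁻¹)) ^ p.conjExponent = g i := fun i hi => by
    rw [hpq.one_sub_inv, Real.rpow_inv_rpow (hg i hi) hpq.symm.ne_zero]
  rwa [sum_congr rfl hpow, one_div, one_div, ← hpq.one_sub_inv] at hholder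

lemma min_add_posPart_sub (a m : ℝ) : min a m + (a - m)⁺ = a := by
  rcases le_total a m with h | h
  · simp [h]
  · simp [h]

lemma abs_min_sub_min_add_abs_posPart_sub (a b m : ℝ) :
    |min a m - min b m| + |(a - m)⁺ - (b - m)⁺| = |a - b| := by
  wlog hba : b ≤ a generalizing a b
  · rw [abs_sub_comm, abs_sub_comm (a - m)⁺, abs_sub_comm a, this b a (le_of_not_ge hba)]
  have hmin : min b m ≤ min a m := min_le_min_right m hba
  have hpos : (b - m)⁺ ≤ (a - m)⁺ := posPart_mono (sub_le_sub_right hba m)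
  rw [abs_of_nonneg (sub_nonneg.2 hmin), abs_of_nonneg (sub_nonneg.2 hpos),
    abs_of_nonneg (sub_nonneg.2 hba)]
  linarith [min_add_posPart_sub a m, min_add_posPart_sub b m]

lemma rpow_sum_rpow_inv_le_layer {ι : Type*} (s : Finset ι) {θ : ℝ} (h0 : 0 < θ) (h1 : θ ≤ 1)
    {m : ℝ} (hm : 0 ≤ m) {f : ι → ℝ} (hf : ∀ i ∈ s, 0 ≤ f i) :
    (∑ i ∈ s, f i ^ θ⁻¹) ^ θ ≤
      m * (#{i ∈ s | 0 < f i} : ℝ) ^ θ + (∑ i ∈ s, (f i - m)⁺ ^ θ⁻¹) ^ θ := by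
  have hmin : ∀ i ∈ s, 0 ≤ min (f i) m := fun i hi => le_min (hf i hi) hm
  have hminkowski := Real.Lp_add_le_of_nonneg s ((one_le_inv₀ h0).2 h1) hmin
    fun i _ => posPart_nonneg (f i - m)
  simp only [min_add_posPart_sub, one_div, inv_inv] at hminkowski
  refine hminkowski.trans (add_le_add_left ?_ _)
  have hterm : ∀ i ∈ s, min (f i) m ^ θ⁻¹ ≤ if 0 < f i then m ^ θ⁻¹ else 0 := by
    intro i hi
    split_ifs with hpos
    · exact Real.rpow_le_rpow (hmin i hi) (min_le_right _ _) (by positivity)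
    · have hzero : f i = 0 := le_antisymm (not_lt.1 hpos) (hf i hi)
      simp [hzero, hm, h0.ne']
  calc (∑ i ∈ s, min (f i) m ^ θ⁻¹) ^ θ
      ≤ (#{i ∈ s | 0 < f i} * m ^ θ⁻¹) ^ θ := by
        refine Real.rpow_le_rpow (sum_nonneg fun i hi => Real.rpow_nonneg (hmin i hi) _) ?_ h0.le
        rw [← nsmul_eq_mul, ← sum_const, sum_filter]
        exact sum_le_sum hterm
    _ = m * (#{i ∈ s | 0 < f i} : ℝ) ^ θ := by
        rw [Real.mul_rpow (by positivity) (by positivity), Real.rpow_inv_rpow hm h0.ne', mul_comm]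

lemma exists_median {ι α : Type*} [LinearOrder α] {s : Finset ι} (hs : s.Nonempty) (u : ι → α) :
    ∃ m : α, 2 * #{i ∈ s | m < u i} ≤ #s ∧ 2 * #{i ∈ s | u i < m} ≤ #s := by
  let T : Finset ι := {i ∈ s | 2 * #{j ∈ s | u i < u j} ≤ #s}
  have hT : T.Nonempty := by
    obtain ⟨i, hi, hmax⟩ := s.exists_max_image u hs
    refine ⟨i, mem_filter.2 ⟨hi, ?_⟩⟩
    rw [filter_false_of_mem fun j hj => not_lt.2 (hmax j hj)]
    simp
  obtain ⟨i, hi, hmin⟩ := T.exists_min_image u hT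
  refine ⟨u i, (mem_filter.1 hi).2, ?_⟩
  by_contra! hlt
  have hbelow : ({j ∈ s | u j < u i} : Finset ι).Nonempty := card_pos.1 (by lia)
  obtain ⟨k, hk, hkmax⟩ := exists_max_image _ u hbelow
  rw [mem_filter] at hk
  have hsub : ({j ∈ s | u k < u j} : Finset ι) ⊆ {j ∈ s | ¬ u j < u i} := by
    intro j hj
    rw [mem_filter] at hj ⊢
    exact ⟨hj.1, fun hlt => (hkmax j (mem_filter.2 ⟨hj.1, hlt⟩)).not_gt hj.2⟩
  have hcard := card_le_card hsub
  have htot := card_filter_add_card_filter_not (s := s) (fun j => u j < u i)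
  have hkT : k ∈ T := mem_filter.2 ⟨hk.1, by lia⟩
  exact (hmin k hkT).not_gt hk.2

lemma sum_sub_wavg_sq_le_sum_sub_sq {V : Type*} {B : Finset V} (hB : B.Nonempty) (u : V → ℝ)
    (m : ℝ) :
    ∑ x ∈ B, (u x - wavg B (fun _ => 1) u) ^ 2 ≤ ∑ x ∈ B, (u x - m) ^ 2 := by
  have hcard : (#B : ℝ) ≠ 0 := by exact_mod_cast hB.card_pos.ne'
  set a := wavg B (fun _ => 1) u with ha
  have hcentred : ∑ x ∈ B, (u x - a) = 0 := by
    simp only [sum_sub_distrib, ha, wavg, one_mul, sum_const, nsmul_eq_mul, mul_one]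
    field_simp
    ring
  have hexpand : ∑ x ∈ B, (u x - m) ^ 2 =
      ∑ x ∈ B, (u x - a) ^ 2 + 2 * (a - m) * ∑ x ∈ B, (u x - a) + #B * (a - m) ^ 2 := by
    rw [mul_sum, ← nsmul_eq_mul, ← sum_const, ← sum_add_distrib, ← sum_add_distrib]
    exact sum_congr rfl fun x _ => by ring
  rw [hexpand, hcentred, mul_zero, add_zero]
  exact le_add_of_nonneg_right (by positivity)

lemma nrm_two_sq {V : Type*} (A : Finset V) (f : V → ℝ) :
    nrm A 2 f ^ 2 = (#A : ℝ)⁻¹ * ∑ x ∈ A, f x ^ 2 := by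
  simp only [nrm, Real.rpow_two, sq_abs]
  rw [← Real.sqrt_eq_rpow, Real.sq_sqrt (by positivity)]

lemma rpow_sum_rpow_eq_mul_nrm {V : Type*} {A : Finset V} (hA : A.Nonempty) (p : ℝ) {f : V → ℝ}
    (hf : ∀ x ∈ A, 0 ≤ f x) : (∑ x ∈ A, f x ^ p) ^ p⁻¹ = (#A : ℝ) ^ p⁻¹ * nrm A p f := by
  have hcard : (0 : ℝ) < #A := by exact_mod_cast hA.card_pos
  have habs : ∀ x ∈ A, |f x| ^ p = f x ^ p := fun x hx => by rw [abs_of_nonneg (hf x hx)]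
  rw [nrm, one_div, ← Real.mul_rpow (by positivity) (by positivity),
    mul_inv_cancel_left₀ hcard.ne', sum_congr rfl habs]

end RCM

namespace RCM

/-! ### Isoperimetric and Sobolev inequalities on a finite set of vertices -/

variable {V : Type*} {G : SimpleGraph V}

open Classical in
/-- The oriented edges of `G` with both endpoints in `B`, so each edge inside `B` occurs twice. -/
def orientedEdges (G : SimpleGraph V) (B : Finset V) : Finset (V × V) := G.interedges B B

/-- The total variation `Σ_{x,y ∈ B, x∼y} |f(x) - f(y)|` of `f` on `B`, where each edge counts
twice. -/
def totalVar (G : SimpleGraph V) (B : Finset V) (f : V → ℝ) : ℝ :=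
  ∑ e ∈ orientedEdges G B, |f e.1 - f e.2|

/-- The isoperimetric inequality in `B` with exponent `θ` and constant `c`, for subsets of at most
half the size of `B`. The exponent `θ = 1` gives a relative isoperimetric (Cheeger) inequality,
`θ = 1 - d⁻¹` the isoperimetric inequality of dimension `d`. -/
def IsoperimetricIn (G : SimpleGraph V) (B : Finset V) (θ c : ℝ) : Prop :=
  ∀ A ⊆ B, 2 * #A ≤ #B → c * (#A : ℝ) ^ θ ≤ #(relBdry G B A)

lemma mem_orientedEdges {B : Finset V} {e : V × V} :
    e ∈ orientedEdges G B ↔ e.1 ∈ B ∧ e.2 ∈ B ∧ G.Adj e.1 e.2 := by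
  classical exact Rel.mem_interedges_iff

lemma sum_orientedEdges_swap (B : Finset V) (F : V × V → ℝ) :
    ∑ e ∈ orientedEdges G B, F e.swap = ∑ e ∈ orientedEdges G B, F e := by
  refine sum_nbij' Prod.swap Prod.swap ?_ ?_ ?_ ?_ ?_ <;>
    simp +contextual [mem_orientedEdges, G.adj_comm]

lemma mem_relBdry {B A : Finset V} {x : V} :
    x ∈ relBdry G B A ↔ x ∈ A ∧ ∃ y ∈ B, y ∉ A ∧ G.Adj x y := by
  simp only [relBdry, mem_filter]

lemma relBdry_subset (B A : Finset V) : relBdry G B A ⊆ A := fun _ hx => (mem_relBdry.1 hx).1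

lemma totalVar_nonneg (B : Finset V) (f : V → ℝ) : 0 ≤ totalVar G B f :=
  sum_nonneg fun _ _ => abs_nonneg _

lemma totalVar_min_add_totalVar_posPart_sub (B : Finset V) (f : V → ℝ) (m : ℝ) :
    totalVar G B (fun x => min (f x) m) + totalVar G B (fun x => (f x - m)⁺) =
      totalVar G B f := by
  simp only [totalVar, ← sum_add_distrib, abs_min_sub_min_add_abs_posPart_sub]

lemma mul_card_relBdry_le_totalVar {A B : Finset V} (hAB : A ⊆ B) {f : V → ℝ} {m : ℝ}
    (hf : ∀ x ∈ A, ∀ y ∈ B, y ∉ A → m ≤ |f x - f y|) :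
    m * #(relBdry G B A) ≤ totalVar G B f := by
  classical
  have houter : ∀ x ∈ relBdry G B A, ∃ y ∈ B, y ∉ A ∧ G.Adj x y := fun x hx =>
    (mem_relBdry.1 hx).2
  choose! outer houterB houterA hadj using houter
  have hinj : Set.InjOn (fun x => (x, outer x)) (relBdry G B A) := fun x _ y _ hxy =>
    congrArg Prod.fst hxy
  have hmaps : (relBdry G B A).image (fun x => (x, outer x)) ⊆ orientedEdges G B := by
    refine image_subset_iff.2 fun x hx => mem_orientedEdges.2 ⟨?_, houterB x hx, hadj x hx⟩
    exact hAB (relBdry_subset B A hx)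
  calc m * #(relBdry G B A) = ∑ _x ∈ relBdry G B A, m := by
        rw [sum_const, nsmul_eq_mul, mul_comm]
    _ ≤ ∑ x ∈ relBdry G B A, |f x - f (outer x)| := sum_le_sum fun x hx =>
        hf x (relBdry_subset B A hx) _ (houterB x hx) (houterA x hx)
    _ = ∑ e ∈ (relBdry G B A).image fun x => (x, outer x), |f e.1 - f e.2| :=
        (sum_image (f := fun e : V × V => |f e.1 - f e.2|) hinj).symm
    _ ≤ totalVar G B f := sum_le_sum_of_subset_of_nonneg hmaps fun _ _ _ => abs_nonneg _

lemma mul_card_relBdry_le_totalVar_min {S B : Finset V} (hSB : S ⊆ B) {f : V → ℝ} {m : ℝ}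
    (hm : 0 ≤ m) (hmf : ∀ x ∈ S, m ≤ f x) (hzero : ∀ x ∈ B, x ∉ S → f x = 0) :
    m * #(relBdry G B S) ≤ totalVar G B fun x => min (f x) m :=
  mul_card_relBdry_le_totalVar hSB fun x hx y hy hyS => by
    rw [hzero y hy hyS, min_eq_right (hmf x hx), min_eq_left hm, sub_zero]
    exact le_abs_self _

/- Induction on the support: removing the lowest layer `min f m`, with `m` the least positive value
of `f`, is exact for the total variation and subadditive for the norm on the left. -/
theorem IsoperimetricIn.rpow_sum_le_totalVar {B : Finset V} {θ c : ℝ}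
    (hiso : IsoperimetricIn G B θ c) (hc : 0 ≤ c) (h0 : 0 < θ) (h1 : θ ≤ 1) {f : V → ℝ}
    (hf : ∀ x ∈ B, 0 ≤ f x) (hhalf : 2 * #{x ∈ B | 0 < f x} ≤ #B) :
    c * (∑ x ∈ B, f x ^ θ⁻¹) ^ θ ≤ totalVar G B f := by
  induction hk : #{x ∈ B | 0 < f x} using Nat.strong_induction_on generalizing f with
  | _ k ih =>
  set S : Finset V := {x ∈ B | 0 < f x} with hS
  have hzero : ∀ x ∈ B, x ∉ S → f x = 0 := fun x hx hxS =>
    (hf x hx).eq_or_lt.elim Eq.symm fun hpos => absurd (mem_filter.2 ⟨hx, hpos⟩) hxS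
  rcases S.eq_empty_or_nonempty with hempty | hne
  · have hpow : ∀ x ∈ B, f x ^ θ⁻¹ = 0 := fun x hx => by
      rw [hzero x hx (by simp [hempty]), Real.zero_rpow (by positivity)]
    rw [sum_congr rfl hpow, sum_const_zero, Real.zero_rpow h0.ne', mul_zero]
    exact totalVar_nonneg B f
  obtain ⟨p, hp, hmin⟩ := S.exists_min_image f hne
  have hm : 0 < f p := (mem_filter.1 hp).2
  have hsupp : ({x ∈ B | 0 < (f x - f p)⁺} : Finset V) ⊂ S := by
    refine (ssubset_iff_of_subset fun x hx => ?_).2 ⟨p, hp, by simp⟩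
    simp only [mem_filter, posPart_pos_iff, sub_pos, hS] at hx ⊢
    exact ⟨hx.1, hm.trans hx.2⟩
  have hcard := card_lt_card hsupp
  have htop : c * (∑ x ∈ B, (f x - f p)⁺ ^ θ⁻¹) ^ θ ≤ totalVar G B fun x => (f x - f p)⁺ :=
    ih _ (hk ▸ hcard) (fun x _ => posPart_nonneg _) (by lia) rfl
  have hlayer : f p * #(relBdry G B S) ≤ totalVar G B fun x => min (f x) (f p) :=
    mul_card_relBdry_le_totalVar_min (filter_subset _ _) hm.le hmin hzero
  calc c * (∑ x ∈ B, f x ^ θ⁻¹) ^ θ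
      ≤ c * (f p * (#S : ℝ) ^ θ + (∑ x ∈ B, (f x - f p)⁺ ^ θ⁻¹) ^ θ) := by
        gcongr
        exact rpow_sum_rpow_inv_le_layer B h0 h1 hm.le hf
    _ = f p * (c * (#S : ℝ) ^ θ) + c * (∑ x ∈ B, (f x - f p)⁺ ^ θ⁻¹) ^ θ := by ring
    _ ≤ f p * #(relBdry G B S) + c * (∑ x ∈ B, (f x - f p)⁺ ^ θ⁻¹) ^ θ := by
        gcongr
        exact hiso S (filter_subset _ _) hhalf
    _ ≤ totalVar G B (fun x => min (f x) (f p)) + totalVar G B (fun x => (f x - f p)⁺) := by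
        gcongr
    _ = totalVar G B f := totalVar_min_add_totalVar_posPart_sub B f (f p)

end RCM

namespace RCM

/-! ### The weighted Poincaré inequality -/

variable {V : Type*} {G : SimpleGraph V} {nbr : V → Finset V} {ω : V → V → ℝ} {B : Finset V}

open Classical in
lemma sum_orientedEdges (B : Finset V) (F : V → V → ℝ) :
    ∑ e ∈ orientedEdges G B, F e.1 e.2 = ∑ x ∈ B, ∑ y ∈ B with G.Adj x y, F x y := by
  rw [orientedEdges, SimpleGraph.interedges_def, sum_filter, sum_product]
  simp only [sum_filter]

lemma dSum_eq_sum_orientedEdges (ω : V → V → ℝ) (B : Finset V) (u : V → ℝ) :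
    dSum G ω B u = ∑ e ∈ orientedEdges G B, ω e.1 e.2 * (u e.1 - u e.2) ^ 2 := by
  rw [sum_orientedEdges B fun x y => ω x y * (u x - u y) ^ 2]
  simp only [dSum, sum_filter]

lemma dSum_nonneg (hω : ∀ x y, G.Adj x y → 0 < ω x y) (B : Finset V) (u : V → ℝ) :
    0 ≤ dSum G ω B u := by
  rw [dSum_eq_sum_orientedEdges]
  exact sum_nonneg fun e he =>
    mul_nonneg (hω _ _ (mem_orientedEdges.1 he).2.2).le (sq_nonneg _)

lemma dSum_le_dSum (hω : ∀ x y, G.Adj x y → 0 < ω x y) (B : Finset V) {g u : V → ℝ}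
    (hgu : ∀ x y, |g x - g y| ≤ |u x - u y|) : dSum G ω B g ≤ dSum G ω B u := by
  simp only [dSum_eq_sum_orientedEdges]
  exact sum_le_sum fun e he =>
    mul_le_mul_of_nonneg_left (sq_le_sq.2 (hgu _ _)) (hω _ _ (mem_orientedEdges.1 he).2.2).le

lemma nu_nonneg (hnbr : ∀ x y, y ∈ nbr x ↔ G.Adj x y) (hω : ∀ x y, G.Adj x y → 0 < ω x y)
    (x : V) : 0 ≤ nu nbr ω x :=
  sum_nonneg fun y hy => inv_nonneg.2 (hω x y ((hnbr x y).1 hy)).le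

lemma sum_orientedEdges_inv_mul_le (hnbr : ∀ x y, y ∈ nbr x ↔ G.Adj x y)
    (hω : ∀ x y, G.Adj x y → 0 < ω x y) {h : V → ℝ} (hh : ∀ x ∈ B, 0 ≤ h x) :
    ∑ e ∈ orientedEdges G B, (ω e.1 e.2)⁻¹ * h e.1 ≤ ∑ x ∈ B, nu nbr ω x * h x := by
  classical
  rw [sum_orientedEdges B fun x y => (ω x y)⁻¹ * h x]
  refine sum_le_sum fun x hx => ?_
  rw [← sum_mul]
  refine mul_le_mul_of_nonneg_right (sum_le_sum_of_subset_of_nonneg ?_ ?_) (hh x hx)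
  · exact fun y hy => (hnbr x y).2 (mem_filter.1 hy).2
  · exact fun y hy _ => inv_nonneg.2 (hω x y ((hnbr x y).1 hy)).le

lemma sq_sum_abs_sub_mul_le (hnbr : ∀ x y, y ∈ nbr x ↔ G.Adj x y)
    (hω : ∀ x y, G.Adj x y → 0 < ω x y) (B : Finset V) (g h : V → ℝ) :
    (∑ e ∈ orientedEdges G B, |g e.1 - g e.2| * h e.1) ^ 2 ≤
      dSum G ω B g * ∑ x ∈ B, nu nbr ω x * h x ^ 2 := by
  have hpos : ∀ e ∈ orientedEdges G B, 0 < ω e.1 e.2 := fun e he =>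
    hω _ _ (mem_orientedEdges.1 he).2.2
  calc (∑ e ∈ orientedEdges G B, |g e.1 - g e.2| * h e.1) ^ 2
      ≤ (∑ e ∈ orientedEdges G B, ω e.1 e.2 * (g e.1 - g e.2) ^ 2) *
          ∑ e ∈ orientedEdges G B, (ω e.1 e.2)⁻¹ * h e.1 ^ 2 := by
        refine sum_sq_le_sum_mul_sum_of_sq_le_mul _ (fun e he => ?_) (fun e he => ?_)
          fun e he => le_of_eq ?_
        · exact mul_nonneg (hpos e he).le (sq_nonneg _)
        · exact mul_nonneg (inv_nonneg.2 (hpos e he).le) (sq_nonneg _)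
        · have := (hpos e he).ne'
          rw [mul_pow, sq_abs]
          field_simp
    _ ≤ dSum G ω B g * ∑ x ∈ B, nu nbr ω x * h x ^ 2 := by
        rw [← dSum_eq_sum_orientedEdges]
        exact mul_le_mul_of_nonneg_left
          (sum_orientedEdges_inv_mul_le hnbr hω fun x _ => sq_nonneg (h x)) (dSum_nonneg hω B g)

lemma totalVar_rpow_le {g : V → ℝ} (hg : ∀ x ∈ B, 0 ≤ g x) {α : ℝ} (hα : 1 ≤ α) :
    totalVar G B (fun x => g x ^ α) ≤
      2 * α * ∑ e ∈ orientedEdges G B, |g e.1 - g e.2| * g e.1 ^ (α - 1) := by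
  have hswap := sum_orientedEdges_swap (G := G) B fun e => |g e.1 - g e.2| * g e.1 ^ (α - 1)
  calc totalVar G B (fun x => g x ^ α)
      ≤ ∑ e ∈ orientedEdges G B, α * (|g e.1 - g e.2| * g e.1 ^ (α - 1) +
          |g e.2 - g e.1| * g e.2 ^ (α - 1)) := by
        refine sum_le_sum fun e he => ?_
        obtain ⟨h1, h2, -⟩ := mem_orientedEdges.1 he
        refine (abs_rpow_sub_rpow_le (hg _ h1) (hg _ h2) hα).trans (le_of_eq ?_)
        rw [abs_sub_comm (g e.2)]
        ring
    _ = 2 * α * ∑ e ∈ orientedEdges G B, |g e.1 - g e.2| * g e.1 ^ (α - 1) := by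
        simp only [Prod.fst_swap, Prod.snd_swap] at hswap
        rw [← mul_sum, sum_add_distrib, hswap]
        ring

lemma IsoperimetricIn.mul_rpow_sum_sq_le {θ c : ℝ} (hiso : IsoperimetricIn G B θ c) (hc : 0 ≤ c)
    (h0 : 1 ≤ 2 * θ) (h1 : θ ≤ 1) {g : V → ℝ} (hg : ∀ x ∈ B, 0 ≤ g x)
    (hhalf : 2 * #{x ∈ B | 0 < g x} ≤ #B) :
    c * (∑ x ∈ B, g x ^ 2) ^ θ ≤
      4 * ∑ e ∈ orientedEdges G B, |g e.1 - g e.2| * g e.1 ^ (2 * θ - 1) := by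
  have hθ : 0 < θ := by linarith
  have hsupp : ({x ∈ B | 0 < g x ^ (2 * θ)} : Finset V) = {x ∈ B | 0 < g x} :=
    filter_congr fun x hx => by
      rw [(Real.rpow_nonneg (hg x hx) _).lt_iff_ne', (hg x hx).lt_iff_ne', Ne,
        Real.rpow_eq_zero (hg x hx) (by linarith)]
  have hpow : ∀ x ∈ B, (g x ^ (2 * θ)) ^ θ⁻¹ = g x ^ 2 := fun x hx => by
    rw [← Real.rpow_mul (hg x hx), mul_inv_cancel_right₀ hθ.ne', Real.rpow_two]
  calc c * (∑ x ∈ B, g x ^ 2) ^ θ = c * (∑ x ∈ B, (g x ^ (2 * θ)) ^ θ⁻¹) ^ θ := by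
        rw [sum_congr rfl hpow]
    _ ≤ totalVar G B fun x => g x ^ (2 * θ) :=
        hiso.rpow_sum_le_totalVar hc hθ h1 (fun x hx => Real.rpow_nonneg (hg x hx) _)
          (hsupp ▸ hhalf)
    _ ≤ 2 * (2 * θ) * ∑ e ∈ orientedEdges G B, |g e.1 - g e.2| * g e.1 ^ (2 * θ - 1) :=
        totalVar_rpow_le hg h0
    _ ≤ 4 * ∑ e ∈ orientedEdges G B, |g e.1 - g e.2| * g e.1 ^ (2 * θ - 1) := by
        refine mul_le_mul_of_nonneg_right (by linarith) (sum_nonneg fun e he => ?_)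
        exact mul_nonneg (abs_nonneg _) (Real.rpow_nonneg (hg _ (mem_orientedEdges.1 he).1) _)

/- The weight `g ^ (2 * (1 - d⁻¹) - 1)` produced by the gradient has the exponent `1 - (d / 2)⁻¹`
for which Hölder's inequality, after Cauchy–Schwarz, returns `∑ g ^ 2`. -/
theorem IsoperimetricIn.sum_sq_le {c d : ℝ} (hiso : IsoperimetricIn G B (1 - d⁻¹) c) (hc : 0 < c)
    (hd : 2 ≤ d) (hnbr : ∀ x y, y ∈ nbr x ↔ G.Adj x y) (hω : ∀ x y, G.Adj x y → 0 < ω x y)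
    {g : V → ℝ} (hg : ∀ x ∈ B, 0 ≤ g x) (hhalf : 2 * #{x ∈ B | 0 < g x} ≤ #B) :
    ∑ x ∈ B, g x ^ 2 ≤
      16 / c ^ 2 * (∑ x ∈ B, nu nbr ω x ^ (d / 2)) ^ (d / 2)⁻¹ * dSum G ω B g := by
  have hd2 : d⁻¹ ≤ 1 / 2 := by rw [one_div]; gcongr
  have hd0 : 0 < d⁻¹ := by positivity
  set β : ℝ := 1 - (d / 2)⁻¹
  have hβ : 2 * (1 - d⁻¹) - 1 = β := by
    simp only [β]
    field_simp
    ring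
  set X := ∑ x ∈ B, g x ^ 2
  set N := (∑ x ∈ B, nu nbr ω x ^ (d / 2)) ^ (d / 2)⁻¹
  set T := ∑ e ∈ orientedEdges G B, |g e.1 - g e.2| * g e.1 ^ β
  have hν := nu_nonneg hnbr hω
  have hX0 : 0 ≤ X := sum_nonneg fun x _ => sq_nonneg _
  have hE0 := dSum_nonneg hω B g
  have hN0 : 0 ≤ N := Real.rpow_nonneg (sum_nonneg fun x _ => Real.rpow_nonneg (hν x) _) _
  have hsobolev : c * X ^ (1 - d⁻¹) ≤ 4 * T := by
    simpa only [hβ] using hiso.mul_rpow_sum_sq_le hc.le (by linarith) (by linarith) hg hhalf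
  have hholder : T ^ 2 ≤ dSum G ω B g * (N * X ^ β) := by
    refine (sq_sum_abs_sub_mul_le hnbr hω B g fun x => g x ^ β).trans ?_
    refine mul_le_mul_of_nonneg_left ?_ hE0
    rw [sum_congr rfl fun x hx => by rw [Real.rpow_pow_comm (hg x hx)]]
    exact sum_mul_rpow_one_sub_inv_le B (by linarith) (fun x _ => hν x) fun x _ => sq_nonneg _
  rcases hX0.eq_or_lt with hX' | hXpos
  · rw [← hX']
    positivity
  have hsplit : (X ^ (1 - d⁻¹)) ^ 2 = X * X ^ β := by
    rw [← Real.rpow_one_add' hX0 (by linarith), ← Real.rpow_mul_natCast hX0, ← hβ]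
    ring_nf
  rw [div_mul_eq_mul_div, div_mul_eq_mul_div, le_div_iff₀' (by positivity)]
  refine le_of_mul_le_mul_right ?_ (Real.rpow_pos_of_pos hXpos β)
  calc c ^ 2 * X * X ^ β = (c * X ^ (1 - d⁻¹)) ^ 2 := by rw [mul_pow, hsplit, mul_assoc]
    _ ≤ (4 * T) ^ 2 := by gcongr
    _ = 16 * T ^ 2 := by ring
    _ ≤ 16 * (dSum G ω B g * (N * X ^ β)) := by gcongr
    _ = 16 * N * dSum G ω B g * X ^ β := by ring

lemma IsoperimetricIn.sum_posPart_sub_sq_le {c d : ℝ} (hiso : IsoperimetricIn G B (1 - d⁻¹) c)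
    (hc : 0 < c) (hd : 2 ≤ d) (hnbr : ∀ x y, y ∈ nbr x ↔ G.Adj x y)
    (hω : ∀ x y, G.Adj x y → 0 < ω x y) {u : V → ℝ} {m : ℝ}
    (hhalf : 2 * #{x ∈ B | m < u x} ≤ #B) :
    ∑ x ∈ B, (u x - m)⁺ ^ 2 ≤
      16 / c ^ 2 * (∑ x ∈ B, nu nbr ω x ^ (d / 2)) ^ (d / 2)⁻¹ * dSum G ω B u := by
  have hN : 0 ≤ ∑ x ∈ B, nu nbr ω x ^ (d / 2) :=
    sum_nonneg fun x _ => Real.rpow_nonneg (nu_nonneg hnbr hω x) _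
  refine (hiso.sum_sq_le hc hd hnbr hω (fun x _ => posPart_nonneg _) ?_).trans
    (mul_le_mul_of_nonneg_left (dSum_le_dSum hω B fun x y => ?_) (by positivity))
  · simpa only [posPart_pos_iff, sub_pos] using hhalf
  · rw [← abs_min_sub_min_add_abs_posPart_sub (u x) (u y) m]
    exact le_add_of_nonneg_left (abs_nonneg _)

/- Split `u` at a median `m`, so that the positive and the negative part of `u - m` are each
supported on at most half of `B`. -/
theorem IsoperimetricIn.sum_sub_wavg_sq_le {c d : ℝ} (hiso : IsoperimetricIn G B (1 - d⁻¹) c)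
    (hc : 0 < c) (hd : 2 ≤ d) (hnbr : ∀ x y, y ∈ nbr x ↔ G.Adj x y)
    (hω : ∀ x y, G.Adj x y → 0 < ω x y) (hB : B.Nonempty) (u : V → ℝ) :
    ∑ x ∈ B, (u x - wavg B (fun _ => 1) u) ^ 2 ≤
      32 / c ^ 2 * (∑ x ∈ B, nu nbr ω x ^ (d / 2)) ^ (d / 2)⁻¹ * dSum G ω B u := by
  obtain ⟨m, habove, hbelow⟩ := exists_median hB u
  have hpos := hiso.sum_posPart_sub_sq_le hc hd hnbr hω habove
  have hneg := hiso.sum_posPart_sub_sq_le hc hd hnbr hω (u := -u) (m := -m) (by simpa using hbelow)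
  have hdSum : dSum G ω B (-u) = dSum G ω B u := by
    simp only [dSum, Pi.neg_apply, neg_sub_neg, sub_sq_comm]
  have hsplit : ∀ x, (u x - m) ^ 2 = (u x - m)⁺ ^ 2 + ((-u) x - -m)⁺ ^ 2 := fun x => by
    rcases le_total (u x) m with h | h <;> simp [h, sub_sq_comm m, neg_add_eq_sub]
  calc ∑ x ∈ B, (u x - wavg B (fun _ => 1) u) ^ 2 ≤ ∑ x ∈ B, (u x - m) ^ 2 :=
        sum_sub_wavg_sq_le_sum_sub_sq hB u m
    _ = ∑ x ∈ B, (u x - m)⁺ ^ 2 + ∑ x ∈ B, ((-u) x - -m)⁺ ^ 2 := by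
        rw [← sum_add_distrib, sum_congr rfl fun x _ => hsplit x]
    _ ≤ _ := by
        rw [hdSum] at hneg
        refine (add_le_add hpos hneg).trans (le_of_eq ?_)
        ring

theorem IsoperimetricIn.nrm_sub_wavg_sq_le {c d : ℝ} (hiso : IsoperimetricIn G B (1 - d⁻¹) c)
    (hc : 0 < c) (hd : 2 ≤ d) (hnbr : ∀ x y, y ∈ nbr x ↔ G.Adj x y)
    (hω : ∀ x y, G.Adj x y → 0 < ω x y) (hB : B.Nonempty) (u : V → ℝ) :
    nrm B 2 (fun x => u x - wavg B (fun _ => 1) u) ^ 2 ≤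
      32 / c ^ 2 * nrm B (d / 2) (nu nbr ω) * ((#B : ℝ) ^ (d / 2)⁻¹ / #B) * dSum G ω B u := by
  have hmain := hiso.sum_sub_wavg_sq_le hc hd hnbr hω hB u
  rw [rpow_sum_rpow_eq_mul_nrm hB _ fun x _ => nu_nonneg hnbr hω x] at hmain
  rw [nrm_two_sq]
  refine (mul_le_mul_of_nonneg_left hmain (by positivity)).trans (le_of_eq ?_)
  ring

end RCM

namespace RCM

/-! ### Isoperimetric inequalities in balls -/

variable {V : Type*} {G : SimpleGraph V} {ball : V → ℝ → Finset V} {d C c : ℝ}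

/-- `ball x r` is the ball of centre `x` and radius `r` for the graph distance of `G`. -/
def IsBallFamily (G : SimpleGraph V) (ball : V → ℝ → Finset V) : Prop :=
  ∀ x r y, y ∈ ball x r ↔ (G.dist x y : ℝ) ≤ r

/-- Volume regularity of order `d`, for a real exponent `d`. -/
def VolumeRegular (ball : V → ℝ → Finset V) (d C : ℝ) : Prop :=
  ∀ x r, 1 ≤ r → C⁻¹ * r ^ d ≤ (#(ball x r) : ℝ) ∧ (#(ball x r) : ℝ) ≤ C * r ^ d

/-- The relative isoperimetric inequality in the given balls, for sets strictly smaller than half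
the ball. -/
def RelIsoperimetric (G : SimpleGraph V) (ball : V → ℝ → Finset V) (c : ℝ) : Prop :=
  ∀ x r (A : Finset V), 1 ≤ r → A.Nonempty → A ⊆ ball x r → (#A : ℝ) < (#(ball x r) : ℝ) / 2 →
    c / r ≤ (#(relBdry G (ball x r) A) : ℝ) / (#A : ℝ)

namespace IsBallFamily

lemma mem_natCast (hball : IsBallFamily G ball) {x y : V} {s : ℕ} :
    y ∈ ball x s ↔ G.dist x y ≤ s := by
  rw [hball, Nat.cast_le]

lemma ball_natFloor (hball : IsBallFamily G ball) (x : V) {r : ℝ} (hr : 0 ≤ r) :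
    ball x ⌊r⌋₊ = ball x r := by
  ext y
  rw [hball.mem_natCast, hball, Nat.le_floor_iff hr]

lemma self_mem (hball : IsBallFamily G ball) (x : V) {r : ℝ} (hr : 0 ≤ r) : x ∈ ball x r := by
  simpa [hball x r x] using hr

lemma one_le_card_ball (hball : IsBallFamily G ball) (x : V) {r : ℝ} (hr : 0 ≤ r) :
    (1 : ℝ) ≤ #(ball x r) := by
  exact_mod_cast card_pos.2 ⟨x, hball.self_mem x hr⟩

lemma exists_walk_support_subset (hball : IsBallFamily G ball) (hG : G.Connected) {x z : V}
    {r : ℝ} (hz : z ∈ ball x r) : ∃ p : G.Walk x z, ∀ v ∈ p.support, v ∈ ball x r := by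
  classical
  obtain ⟨p, hp⟩ := hG.exists_walk_length_eq_dist x z
  refine ⟨p, fun v hv => (hball x r v).2 (le_trans ?_ ((hball x r z).1 hz))⟩
  rw [← hp]
  exact_mod_cast (SimpleGraph.dist_le _).trans (p.length_takeUntil_le_length hv)

lemma exists_monotone_balls (hball : IsBallFamily G ball) (hG : G.Connected) {x z : V} {N : ℕ}
    (hz : z ∈ ball x N) :
    ∃ y : ℕ → V, y 0 = z ∧ y N = x ∧ Monotone fun s : ℕ => ball (y s) s := by
  obtain ⟨p, hp⟩ := hG.exists_walk_length_eq_dist z x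
  have hlen : p.length ≤ N := by rw [hp, G.dist_comm, ← hball.mem_natCast]; exact hz
  refine ⟨p.getVert, p.getVert_zero, p.getVert_of_length_le hlen,
    monotone_nat_of_le_succ fun s v hv => ?_⟩
  have hstep : G.dist (p.getVert (s + 1)) (p.getVert s) ≤ 1 := by
    rcases lt_or_ge s p.length with hs | hs
    · exact (SimpleGraph.dist_eq_one_iff_adj.2 (p.adj_getVert_succ hs).symm).le
    · simp [p.getVert_of_length_le hs, p.getVert_of_length_le (hs.trans s.le_succ)]
  have htri := hG.dist_triangle (u := p.getVert (s + 1)) (v := p.getVert s) (w := v)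
  rw [hball.mem_natCast] at hv ⊢
  lia

lemma relBdry_nonempty (hball : IsBallFamily G ball) (hG : G.Connected) {x : V} {r : ℝ}
    {A : Finset V} (hA : A.Nonempty) (hAB : A ⊂ ball x r) : (relBdry G (ball x r) A).Nonempty := by
  obtain ⟨a, ha⟩ := hA
  obtain ⟨b, hb, hbA⟩ := exists_of_ssubset hAB
  obtain ⟨p, hp⟩ := hball.exists_walk_support_subset hG (hAB.1 ha)
  obtain ⟨q, hq⟩ := hball.exists_walk_support_subset hG hb
  obtain ⟨e, he, hfst, hsnd⟩ := (p.reverse.append q).exists_boundary_dart (A : Set V) ha hbA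
  refine ⟨e.fst, mem_relBdry.2 ⟨hfst, e.snd, ?_, hsnd, e.adj⟩⟩
  have hmem := SimpleGraph.Walk.dart_snd_mem_support_of_mem_darts _ he
  rw [SimpleGraph.Walk.mem_support_append_iff, SimpleGraph.Walk.support_reverse,
    List.mem_reverse] at hmem
  exact hmem.elim (hp _) (hq _)

lemma card_relBdry_erase_le [DecidableEq V] (hball : IsBallFamily G ball) (B A : Finset V)
    (p : V) : #(relBdry G B (A.erase p)) ≤ #(relBdry G B A) + #(ball p 1) := by
  refine (card_le_card fun z hz => ?_).trans (card_union_le _ _)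
  obtain ⟨hzA, y, hyB, hyA, hzy⟩ := mem_relBdry.1 hz
  by_cases hyp : y = p
  · refine mem_union_right _ ((hball _ _ _).2 ?_)
    rw [← hyp, SimpleGraph.dist_eq_one_iff_adj.2 hzy.symm, Nat.cast_one]
  · refine mem_union_left _ (mem_relBdry.2 ⟨mem_of_mem_erase hzA, y, hyB, ?_, hzy⟩)
    exact fun hy => hyA (mem_erase.2 ⟨hyp, hy⟩)

lemma exists_disjoint_balls_covering (hball : IsBallFamily G ball) (hG : G.Connected)
    (A : Finset V) (y : V → V) (r : V → ℝ) (hmem : ∀ z ∈ A, z ∈ ball (y z) (r z)) :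
    ∃ U ⊆ A, (U : Set V).PairwiseDisjoint (fun b => ball (y b) (r b)) ∧
      ∀ a ∈ A, ∃ b ∈ U, a ∈ ball (y b) (5 * r b) := by
  obtain ⟨R, hR⟩ := (A.image r).exists_le
  obtain ⟨U, hUA, hdisj, hcov⟩ := Vitali.exists_disjoint_subfamily_covering_enlargement
    (fun z => (ball (y z) (r z) : Set V)) (A : Set V) r 2 one_lt_two
    (fun z hz => (Nat.cast_nonneg _).trans ((hball _ _ _).1 (hmem z hz))) R
    (fun z hz => hR _ (mem_image_of_mem r hz)) (fun z hz => ⟨z, hmem z hz⟩)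
  lift U to Finset V using A.finite_toSet.subset hUA
  refine ⟨U, by exact_mod_cast hUA, fun a ha b hb hab => ?_, fun a ha => ?_⟩
  · exact disjoint_coe.1 (hdisj ha hb hab)
  obtain ⟨b, hb, ⟨v, hva, hvb⟩, hrab⟩ := hcov a ha
  refine ⟨b, hb, (hball _ _ _).2 ?_⟩
  have hya := (hball _ _ _).1 (hmem a ha)
  have hyv := (hball _ _ _).1 (mem_coe.1 hva)
  have hbv := (hball _ _ _).1 (mem_coe.1 hvb)
  have htri : (G.dist (y b) a : ℝ) ≤ G.dist (y b) v + (G.dist (y a) v + G.dist (y a) a) := by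
    rw [G.dist_comm (u := y a) (v := v)]
    exact_mod_cast hG.dist_triangle.trans (Nat.add_le_add_left hG.dist_triangle _)
  linarith

end IsBallFamily

lemma sum_card_relBdry_inter_le [DecidableEq V] {ι : Type*} {U : Finset ι} {D : ι → Finset V}
    {B : Finset V} (hdisj : (U : Set ι).PairwiseDisjoint D) (hD : ∀ b ∈ U, D b ⊆ B)
    (A : Finset V) : ∑ b ∈ U, #(relBdry G (D b) (A ∩ D b)) ≤ #(relBdry G B A) := by
  have hsub : ∀ b, relBdry G (D b) (A ∩ D b) ⊆ D b := fun b =>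
    (relBdry_subset _ _).trans inter_subset_right
  rw [← card_biUnion fun a ha b hb hab => (hdisj ha hb hab).mono (hsub a) (hsub b)]
  refine card_le_card (biUnion_subset.2 fun b hb v hv => ?_)
  obtain ⟨hvA, w, hwD, hwA, hvw⟩ := mem_relBdry.1 hv
  exact mem_relBdry.2 ⟨(mem_inter.1 hvA).1, w, hD b hb hwD,
    fun hw => hwA (mem_inter.2 ⟨hw, hwD⟩), hvw⟩

namespace VolumeRegular

lemma one_le_const (hvol : VolumeRegular ball d C) (hball : IsBallFamily G ball) (x : V) :
    1 ≤ C := by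
  simpa using (hball.one_le_card_ball x zero_le_one).trans (hvol x 1 le_rfl).2

lemma rpow_le_mul_card (hvol : VolumeRegular ball d C) (hC : 0 < C) (x : V) {r : ℝ}
    (hr : 1 ≤ r) : r ^ d ≤ C * #(ball x r) :=
  (inv_mul_le_iff₀ hC).1 (hvol x r hr).1

lemma card_ball_one_le (hvol : VolumeRegular ball d C) (x : V) : (#(ball x 1) : ℝ) ≤ C := by
  simpa using (hvol x 1 le_rfl).2

lemma card_ball_succ_le (hvol : VolumeRegular ball d C) (hball : IsBallFamily G ball)
    (hd : 0 ≤ d) (x y : V) (t : ℕ) :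
    (#(ball x (t + 1 : ℕ)) : ℝ) ≤ 2 ^ d * C ^ 2 * #(ball y t) := by
  have hC := hvol.one_le_const hball x
  have htwo : (1 : ℝ) ≤ 2 ^ d := Real.one_le_rpow one_le_two hd
  rcases t.eq_zero_or_pos with rfl | ht
  · calc (#(ball x (0 + 1 : ℕ)) : ℝ) ≤ 1 * C * 1 := by simpa using hvol.card_ball_one_le x
      _ ≤ 2 ^ d * C ^ 2 * #(ball y (0 : ℕ)) := by
        gcongr
        · exact le_self_pow₀ hC two_ne_zero
        · exact hball.one_le_card_ball y (by simp)
  have ht1 : (1 : ℝ) ≤ t := by exact_mod_cast ht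
  calc (#(ball x (t + 1 : ℕ)) : ℝ) ≤ C * ((t + 1 : ℕ) : ℝ) ^ d := (hvol x _ (by simp)).2
    _ ≤ C * (2 * t) ^ d := by
        gcongr
        push_cast
        linarith
    _ = 2 ^ d * C * (t : ℝ) ^ d := by rw [Real.mul_rpow zero_le_two t.cast_nonneg]; ring
    _ ≤ 2 ^ d * C * (C * #(ball y t)) := by
        gcongr
        exact hvol.rpow_le_mul_card (by linarith) y ht1
    _ = 2 ^ d * C ^ 2 * #(ball y t) := by ring

end VolumeRegular

namespace RelIsoperimetric

lemma mul_card_le (hiso : RelIsoperimetric G ball c) {x : V} {r : ℝ} (hr : 1 ≤ r) {A : Finset V}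
    (hA : A ⊆ ball x r) (hhalf : 2 * #A < #(ball x r)) :
    c * #A ≤ r * #(relBdry G (ball x r) A) := by
  rcases A.eq_empty_or_nonempty with rfl | hne
  · rw [card_empty, Nat.cast_zero, mul_zero]
    positivity
  have hcard : (0 : ℝ) < #A := by exact_mod_cast hne.card_pos
  have hlt : (2 * #A : ℝ) < #(ball x r) := by exact_mod_cast hhalf
  have h := hiso x r A hr hne hA (by linarith)
  rw [div_le_div_iff₀ (by linarith) hcard] at h
  linarith

lemma mul_card_erase_le [DecidableEq V] (hiso : RelIsoperimetric G ball c)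
    (hball : IsBallFamily G ball) {D : ℝ} (hD : ∀ p, (#(ball p 1) : ℝ) ≤ D) {x p : V} {r : ℝ}
    (hr : 1 ≤ r) {A : Finset V} (hA : A ⊆ ball x r) (hhalf : 2 * #A ≤ #(ball x r))
    (hp : p ∈ relBdry G (ball x r) A) :
    c / (1 + D) * #(A.erase p) ≤ r * #(relBdry G (ball x r) A) := by
  have hcard := card_erase_add_one (relBdry_subset _ _ hp)
  have hD0 : 0 ≤ D := (Nat.cast_nonneg _).trans (hD p)
  have hone : (1 : ℝ) ≤ #(relBdry G (ball x r) A) := by exact_mod_cast card_pos.2 ⟨p, hp⟩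
  have hbdry : (#(relBdry G (ball x r) (A.erase p)) : ℝ) ≤
      #(relBdry G (ball x r) A) + #(ball p 1) := by
    exact_mod_cast hball.card_relBdry_erase_le (ball x r) A p
  rw [div_mul_eq_mul_div, div_le_iff₀ (by linarith)]
  calc c * #(A.erase p) ≤ r * #(relBdry G (ball x r) (A.erase p)) :=
        hiso.mul_card_le hr ((erase_subset p A).trans hA) (by lia)
    _ ≤ r * (#(relBdry G (ball x r) A) + D) := by
        gcongr
        exact hbdry.trans (add_le_add_right (hD p) _)
    _ ≤ r * (#(relBdry G (ball x r) A) * (1 + D)) := by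
        gcongr
        rw [mul_one_add]
        exact add_le_add_right (le_mul_of_one_le_left hD0 hone) _
    _ = r * #(relBdry G (ball x r) A) * (1 + D) := by ring

/- A set of exactly half the volume is not covered by the hypothesis: remove a boundary point, which
changes the boundary by at most the size of a unit ball. -/
lemma isoperimetricIn_one (hiso : RelIsoperimetric G ball c) (hball : IsBallFamily G ball)
    (hG : G.Connected) {D : ℝ} (hD : ∀ p, (#(ball p 1) : ℝ) ≤ D) (x : V) {r : ℝ} (hr : 1 ≤ r) :
    IsoperimetricIn G (ball x r) 1 (min 1 (c / (1 + D)) / 2 / r) := by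
  classical
  intro A hAB hhalf
  rcases A.eq_empty_or_nonempty with rfl | hne
  · simp
  have hss : A ⊂ ball x r := hAB.ssubset_of_ne fun heq => by
    have := hne.card_pos
    rw [← heq] at hhalf
    lia
  obtain ⟨p, hp⟩ := hball.relBdry_nonempty hG hne hss
  have hcard := card_erase_add_one (relBdry_subset _ _ hp)
  have hone : (1 : ℝ) ≤ #(relBdry G (ball x r) A) := by exact_mod_cast card_pos.2 ⟨p, hp⟩
  have hrest : min 1 (c / (1 + D)) * #(A.erase p) ≤ r * #(relBdry G (ball x r) A) :=
    (mul_le_mul_of_nonneg_right (min_le_right _ _) (Nat.cast_nonneg _)).trans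
      (hiso.mul_card_erase_le hball hD hr hAB hhalf hp)
  have hpoint : min 1 (c / (1 + D)) ≤ r * #(relBdry G (ball x r) A) :=
    (min_le_left _ _).trans (one_le_mul_of_one_le_of_one_le hr hone)
  rw [Real.rpow_one, div_div, div_mul_eq_mul_div, div_le_iff₀ (by linarith), ← hcard]
  push_cast
  linarith

end RelIsoperimetric

/- Move the centre of the balls from `z` to `x` along a geodesic while the radius grows from `0` to
`N`; the first ball of which `A` fills at most half has the required properties. -/
lemma VolumeRegular.exists_ball_card_inter [DecidableEq V] (hvol : VolumeRegular ball d C)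
    (hball : IsBallFamily G ball) (hG : G.Connected) (hd : 0 ≤ d) {x z : V} {N : ℕ}
    {A : Finset V} (hA : A ⊆ ball x N) (hhalf : 2 * #A ≤ #(ball x N)) (hz : z ∈ A) :
    ∃ (y : V) (s : ℕ), 1 ≤ s ∧ z ∈ ball y s ∧ ball y s ⊆ ball x N ∧
      2 * #(A ∩ ball y s) ≤ #(ball y s) ∧
      (#(ball y s) : ℝ) ≤ 2 * (2 ^ d * C ^ 2) * #(A ∩ ball y s) := by
  obtain ⟨y, hy0, hyN, hmono⟩ := hball.exists_monotone_balls hG (hA hz)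
  have hmem : ∀ s : ℕ, z ∈ ball (y s) s := fun s =>
    hmono s.zero_le (by simpa [hy0] using hball.self_mem z le_rfl)
  have hN : 2 * #(A ∩ ball (y N) N) ≤ #(ball (y N) N) := by rwa [hyN, inter_eq_left.2 hA]
  have hzero : ¬ 2 * #(A ∩ ball (y 0) (0 : ℕ)) ≤ #(ball (y 0) (0 : ℕ)) := by
    have hsing : ball (y 0) (0 : ℕ) = {z} := by
      ext v
      rw [hball.mem_natCast, Nat.le_zero, hG.dist_eq_zero_iff, hy0, mem_singleton, eq_comm]
    rw [hsing, inter_singleton_of_mem hz, card_singleton]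
    lia
  have hex : ∃ s : ℕ, 2 * #(A ∩ ball (y s) s) ≤ #(ball (y s) s) := ⟨N, hN⟩
  obtain ⟨t, ht⟩ := Nat.exists_eq_succ_of_ne_zero
    fun h0 : Nat.find hex = 0 => hzero (h0 ▸ Nat.find_spec hex)
  have htN : t + 1 ≤ N := ht.symm.le.trans (Nat.find_min' hex hN)
  have htop := Nat.find_spec hex
  have hbot : #(ball (y t) t) < 2 * #(A ∩ ball (y t) t) := not_le.1 (Nat.find_min hex (by lia))
  rw [ht] at htop
  refine ⟨y (t + 1), t + 1, by lia, hmem _, hyN ▸ hmono htN, htop, ?_⟩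
  have hinter : #(A ∩ ball (y t) t) ≤ #(A ∩ ball (y (t + 1)) (t + 1 : ℕ)) :=
    card_le_card (inter_subset_inter_left (hmono t.le_succ))
  calc (#(ball (y (t + 1)) (t + 1 : ℕ)) : ℝ) ≤ 2 ^ d * C ^ 2 * #(ball (y t) t) :=
        hvol.card_ball_succ_le hball hd _ _ t
    _ ≤ 2 ^ d * C ^ 2 * (2 * #(A ∩ ball (y (t + 1)) (t + 1 : ℕ))) := by
        gcongr
        exact_mod_cast (hbot.trans_le (Nat.mul_le_mul_left 2 hinter)).le
    _ = _ := by ring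

lemma RelIsoperimetric.exists_ball_rpow_le_card_relBdry [DecidableEq V]
    (hiso : RelIsoperimetric G ball c) (hvol : VolumeRegular ball d C)
    (hball : IsBallFamily G ball) (hG : G.Connected) (hd : 0 ≤ d) (hC : 0 < C) (hc : 0 < c)
    {x z : V} {N : ℕ} {A : Finset V} (hA : A ⊆ ball x N) (hhalf : 2 * #A ≤ #(ball x N))
    (hz : z ∈ A) :
    ∃ (y : V) (s : ℕ), 1 ≤ s ∧ z ∈ ball y s ∧ ball y s ⊆ ball x N ∧
      min 1 (c / (1 + C)) / 2 / (2 * 2 ^ d * C ^ 3) * (s : ℝ) ^ (d - 1) ≤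
        #(relBdry G (ball y s) (A ∩ ball y s)) := by
  obtain ⟨y, s, hs, hzy, hyx, hle, hge⟩ := hvol.exists_ball_card_inter hball hG hd hA hhalf hz
  refine ⟨y, s, hs, hzy, hyx, ?_⟩
  have hs1 : (1 : ℝ) ≤ s := by exact_mod_cast hs
  have hcheeger := hiso.isoperimetricIn_one hball hG hvol.card_ball_one_le y hs1 _
    inter_subset_right hle
  rw [Real.rpow_one] at hcheeger
  have hvolume : (s : ℝ) ^ d ≤ 2 * 2 ^ d * C ^ 3 * #(A ∩ ball y s) := by
    calc (s : ℝ) ^ d ≤ C * #(ball y s) := hvol.rpow_le_mul_card hC y hs1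
      _ ≤ C * (2 * (2 ^ d * C ^ 2) * #(A ∩ ball y s)) := by gcongr
      _ = _ := by ring
  calc min 1 (c / (1 + C)) / 2 / (2 * 2 ^ d * C ^ 3) * (s : ℝ) ^ (d - 1)
      = min 1 (c / (1 + C)) / 2 / s * ((s : ℝ) ^ d / (2 * 2 ^ d * C ^ 3)) := by
        rw [Real.rpow_sub_one (by linarith)]
        field_simp
    _ ≤ min 1 (c / (1 + C)) / 2 / s * #(A ∩ ball y s) := by
        gcongr
        rwa [div_le_iff₀' (by positivity)]
    _ ≤ #(relBdry G (ball y s) (A ∩ ball y s)) := hcheeger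

lemma VolumeRegular.card_le_mul_sum_rpow (hvol : VolumeRegular ball d C) {ι : Type*}
    {A : Finset V} {U : Finset ι} {y : ι → V} {r : ι → ℝ} (hr : ∀ b ∈ U, 1 ≤ r b)
    (hcov : ∀ a ∈ A, ∃ b ∈ U, a ∈ ball (y b) (5 * r b)) :
    (#A : ℝ) ≤ C * 5 ^ d * ∑ b ∈ U, r b ^ d := by
  classical
  have hsub : A ⊆ U.biUnion fun b => ball (y b) (5 * r b) := fun a ha => by
    simpa only [mem_biUnion] using hcov a ha
  calc (#A : ℝ) ≤ ∑ b ∈ U, (#(ball (y b) (5 * r b)) : ℝ) := by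
        exact_mod_cast (card_le_card hsub).trans card_biUnion_le
    _ ≤ ∑ b ∈ U, C * 5 ^ d * r b ^ d := by
        refine sum_le_sum fun b hb => ?_
        have hrb := hr b hb
        refine (hvol (y b) _ (by linarith)).2.trans (le_of_eq ?_)
        rw [Real.mul_rpow (by norm_num) (by linarith), mul_assoc]
    _ = C * 5 ^ d * ∑ b ∈ U, r b ^ d := by rw [mul_sum]

theorem VolumeRegular.rpow_card_le_card_relBdry_of_local [DecidableEq V]
    (hvol : VolumeRegular ball d C) (hball : IsBallFamily G ball) (hG : G.Connected)
    (hd : 1 < d) (hC : 0 < C) {κ : ℝ} (hκ : 0 ≤ κ) {A B : Finset V}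
    (hlocal : ∀ z ∈ A, ∃ (y : V) (r : ℝ), 1 ≤ r ∧ z ∈ ball y r ∧ ball y r ⊆ B ∧
      κ * r ^ (d - 1) ≤ #(relBdry G (ball y r) (A ∩ ball y r))) :
    κ / (C * 5 ^ d) ^ (1 - d⁻¹) * (#A : ℝ) ^ (1 - d⁻¹) ≤ #(relBdry G B A) := by
  choose! y r hr hmem hsub hbdry using hlocal
  obtain ⟨U, hUA, hdisj, hcov⟩ := hball.exists_disjoint_balls_covering hG A y r hmem
  have hr0 : ∀ b ∈ U, 0 ≤ r b := fun b hb => zero_le_one.trans (hr b (hUA hb))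
  have hvolume := hvol.card_le_mul_sum_rpow (fun b hb => hr b (hUA hb)) hcov
  have hθ0 : 0 < 1 - d⁻¹ := sub_pos.2 (inv_lt_one_of_one_lt₀ hd)
  have hθ1 : 1 - d⁻¹ ≤ 1 := sub_le_self _ (by positivity)
  have hpow : ∀ b ∈ U, (r b ^ d) ^ (1 - d⁻¹) = r b ^ (d - 1) := fun b hb => by
    rw [← Real.rpow_mul (hr0 b hb), mul_one_sub, mul_inv_cancel₀ (by linarith)]
  have hsum0 : 0 ≤ ∑ b ∈ U, r b ^ d := sum_nonneg fun b hb => Real.rpow_nonneg (hr0 b hb) _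
  rw [div_mul_eq_mul_div, div_le_iff₀ (by positivity)]
  calc κ * (#A : ℝ) ^ (1 - d⁻¹) ≤ κ * (C * 5 ^ d * ∑ b ∈ U, r b ^ d) ^ (1 - d⁻¹) := by gcongr
    _ = κ * (∑ b ∈ U, r b ^ d) ^ (1 - d⁻¹) * (C * 5 ^ d) ^ (1 - d⁻¹) := by
        rw [Real.mul_rpow (by positivity) hsum0]
        ring
    _ ≤ κ * (∑ b ∈ U, r b ^ (d - 1)) * (C * 5 ^ d) ^ (1 - d⁻¹) := by
        gcongr
        rw [← sum_congr rfl hpow]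
        exact rpow_sum_le_sum_rpow U (fun b hb => Real.rpow_nonneg (hr0 b hb) _) hθ0 hθ1
    _ ≤ #(relBdry G B A) * (C * 5 ^ d) ^ (1 - d⁻¹) := by
        gcongr
        rw [mul_sum]
        refine (sum_le_sum fun b hb => hbdry b (hUA hb)).trans ?_
        exact_mod_cast sum_card_relBdry_inter_le hdisj (fun b hb => hsub b (hUA hb)) A

/-- The constant in the isoperimetric inequality of dimension `d` in balls, for volume constant `C`
and relative isoperimetric constant `c`. -/
def isoConst (d C c : ℝ) : ℝ :=
  min 1 (c / (1 + C)) / 2 / (2 * 2 ^ d * C ^ 3) / (C * 5 ^ d) ^ (1 - d⁻¹)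

lemma isoConst_pos (d : ℝ) (hC : 0 < C) (hc : 0 < c) : 0 < isoConst d C c := by
  unfold isoConst
  positivity

theorem RelIsoperimetric.isoperimetricIn_ball (hiso : RelIsoperimetric G ball c)
    (hvol : VolumeRegular ball d C) (hball : IsBallFamily G ball) (hG : G.Connected)
    (hd : 1 < d) (hC : 0 < C) (hc : 0 < c) (x : V) {r : ℝ} (hr : 0 ≤ r) :
    IsoperimetricIn G (ball x r) (1 - d⁻¹) (isoConst d C c) := by
  classical
  rw [← hball.ball_natFloor x hr]
  intro A hA hhalf
  refine hvol.rpow_card_le_card_relBdry_of_local hball hG hd hC (by positivity) fun z hz => ?_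
  obtain ⟨y, s, hs, hlocal⟩ := hiso.exists_ball_rpow_le_card_relBdry hvol hball hG
    (by linarith) hC hc hA hhalf hz
  exact ⟨y, s, by exact_mod_cast hs, hlocal⟩

lemma VolumeRegular.rpow_card_ball_le (hvol : VolumeRegular ball d C) (hd : 0 < d) (hC : 0 ≤ C)
    (x : V) {r : ℝ} (hr : 1 ≤ r) :
    (#(ball x r) : ℝ) ^ (d / 2)⁻¹ ≤ C ^ (d / 2)⁻¹ * r ^ 2 := by
  have hr0 : 0 ≤ r := zero_le_one.trans hr
  calc (#(ball x r) : ℝ) ^ (d / 2)⁻¹ ≤ (C * r ^ d) ^ (d / 2)⁻¹ := by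
        gcongr
        exact (hvol x r hr).2
    _ = C ^ (d / 2)⁻¹ * r ^ 2 := by
        rw [Real.mul_rpow hC (by positivity), ← Real.rpow_mul hr0, inv_div,
          mul_div_cancel₀ _ hd.ne', Real.rpow_two]

end RCM

open RCM in
theorem local_poincare_inequality_general.{u} (d : ℝ) (hd : 2 ≤ d) (Creg Criso : ℝ)
    (hCreg : 0 < Creg) (hCriso : 0 < Criso) :
    ∃ CPI : ℝ, 0 < CPI ∧
      ∀ (V : Type u) (G : SimpleGraph V) (nbr : V → Finset V)
        (_ : ∀ x y, y ∈ nbr x ↔ G.Adj x y) (_ : G.Connected)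
        (ball : V → ℝ → Finset V) (_ : IsBallFamily G ball) (_ : VolumeRegular ball d Creg)
        (_ : RelIsoperimetric G ball Criso)
        (ω : V → V → ℝ) (_ : ∀ x y, G.Adj x y → 0 < ω x y)
        (x₀ : V) (n : ℝ) (_ : 1 ≤ n) (u : V → ℝ),
        nrm (ball x₀ n) 2 (fun x => u x - wavg (ball x₀ n) (fun _ => 1) u) ^ 2 ≤
          CPI * nrm (ball x₀ n) (d / 2) (nu nbr ω) *
            (n ^ 2 / (#(ball x₀ n) : ℝ)) * dSum G ω (ball x₀ n) u := by
  have hc := isoConst_pos d hCreg hCriso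
  refine ⟨32 / isoConst d Creg Criso ^ 2 * Creg ^ (d / 2)⁻¹, by positivity, ?_⟩
  intro V G nbr hnbr hG ball hball hvol hiso ω hω x₀ n hn u
  have hn0 : 0 ≤ n := zero_le_one.trans hn
  have hball_iso := hiso.isoperimetricIn_ball hvol hball hG (by linarith) hCreg hCriso x₀ hn0
  have hE := dSum_nonneg hω (ball x₀ n) u
  have hN : 0 ≤ nrm (ball x₀ n) (d / 2) (nu nbr ω) := by unfold nrm; positivity
  refine (hball_iso.nrm_sub_wavg_sq_le hc hd hnbr hω ⟨x₀, hball.self_mem x₀ hn0⟩ u).trans ?_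
  calc _ ≤ 32 / isoConst d Creg Criso ^ 2 * nrm (ball x₀ n) (d / 2) (nu nbr ω) *
        (Creg ^ (d / 2)⁻¹ * n ^ 2 / #(ball x₀ n)) * dSum G ω (ball x₀ n) u := by
        gcongr
        exact hvol.rpow_card_ball_le (by linarith) hCreg.le x₀ hn
    _ = _ := by ring

open RCM in
/-- **Local Poincaré inequality.** -/
theorem local_poincare_inequality
    (d : ℕ) (hd : 2 ≤ d) (Creg Criso : ℝ) (hCreg : 0 < Creg) (hCriso : 0 < Criso) :
    ∃ CPI : ℝ, 0 < CPI ∧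
      ∀ (V : Type) (G : SimpleGraph V) (nbr : V → Finset V)
        (_ : ∀ x y, y ∈ nbr x ↔ G.Adj x y)
        (_ : Infinite V) (_ : G.Connected)
        (ball : V → ℝ → Finset V)
        (_ : ∀ (x : V) (r : ℝ) (y : V), y ∈ ball x r ↔ (G.dist x y : ℝ) ≤ r)
        (_ : ∀ (x : V) (r : ℝ), 1 ≤ r →
              Creg⁻¹ * r ^ d ≤ ((ball x r).card : ℝ) ∧ ((ball x r).card : ℝ) ≤ Creg * r ^ d)
        (_ : ∀ (x : V) (r : ℝ) (A : Finset V), 1 ≤ r → A.Nonempty → A ⊆ ball x r →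
              (A.card : ℝ) < ((ball x r).card : ℝ) / 2 →
              Criso / r ≤ ((RCM.relBdry G (ball x r) A).card : ℝ) / (A.card : ℝ))
        (ω : V → V → ℝ)
        (_ : ∀ x y, ω x y = ω y x)
        (_ : ∀ x y, G.Adj x y → 0 < ω x y)
        (_ : ∀ x y, ¬ G.Adj x y → ω x y = 0)
        (x₀ : V) (n : ℝ) (_ : 1 ≤ n) (u : V → ℝ),
        nrm (ball x₀ n) 2 (fun x => u x - wavg (ball x₀ n) (fun _ => 1) u) ^ 2 ≤
          CPI * nrm (ball x₀ n) ((d : ℝ) / 2) (nu nbr ω) *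
            (n ^ 2 / ((ball x₀ n).card : ℝ)) * dSum G ω (ball x₀ n) u := by
  obtain ⟨CPI, hpos, hCPI⟩ :=
    local_poincare_inequality_general d (by exact_mod_cast hd) Creg Criso hCreg hCriso
  exact ⟨CPI, hpos, fun V G nbr hnbr _ hG ball hball hvol hiso ω _ hω _ =>
    hCPI V G nbr hnbr hG ball hball (by simpa only [VolumeRegular, Real.rpow_natCast] using hvol)
      hiso ω hω⟩
end
end

section
/- There is a universal constant C₂ < ∞ such that the following holds. Let B ⊂ V be a finite connected set, let η : V → ℝ satisfy η = 0 outside B, 0 ≤ η ≤ 1 and η ≡ 0 on ∂B, and let u : V → (0,∞) satisfy (L_Y^ω u)(x) ≥ 0 for all x ∈ B. Then for every α ≥ 1: E^ω_{η²}(u^α)/|B| ≤ C₂·(α⁴/(2α−1)²)·‖∇η‖²_{ℓ∞(E)}·‖u^{2α}‖_{1,B,μ^ω}. -/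
open Finset MeasureTheory
open scoped ENNReal

noncomputable section

/-! Test subharmonicity with `φ = η² u^(2α-1)`. On an edge with `u`-values `a, b` and cutoff values
`p, q`, summation by parts produces `(q² b^(2α-1) - p² a^(2α-1)) (b - a)`. Splitting this product
symmetrically gives `½ (p² + q²) (b^(2α-1) - a^(2α-1)) (b - a)`, which by Cauchy–Schwarz controls
`(p² + q²) (b^α - a^α)²` up to the factor `K = α² / (2α - 1)`, and a cross term carrying the factor
`q - p`, of which Young's inequality absorbs one half into the energy. -/

namespace RCM

section Real

variable {a b α β : ℝ}

lemma monotoneOn_sq_mul_sub_rpow_add_rpow (hα : 1 / 2 < α) (c : ℝ) :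
    MonotoneOn (fun t : ℝ => c ^ 2 * t - 2 * c * (t ^ α / α) + t ^ (2 * α - 1) / (2 * α - 1))
      (Set.Ici 0) := by
  have hα₀ : 0 < α := by linarith
  have hβ₀ : 0 < 2 * α - 1 := by linarith
  refine monotoneOn_of_hasDerivWithinAt_nonneg (f' := fun t => (c - t ^ (α - 1)) ^ 2)
    (convex_Ici 0) ?_ (fun t ht => ?_) fun t _ => sq_nonneg _
  · have hcont {r : ℝ} (hr : 0 < r) : Continuous fun t : ℝ => t ^ r :=
      Real.continuous_rpow_const hr.le
    have := hcont hα₀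
    have := hcont hβ₀
    fun_prop
  · have ht₀ : 0 < t := by simpa only [interior_Ici, Set.mem_Ioi] using ht
    have hpow {r : ℝ} (hr : 0 < r) : HasDerivAt (fun s : ℝ => s ^ r / r) (t ^ (r - 1)) t := by
      simpa only [mul_div_cancel_left₀ _ hr.ne'] using
        (Real.hasDerivAt_rpow_const (p := r) (Or.inl ht₀.ne')).div_const r
    have hsq : t ^ (2 * α - 1 - 1) = (t ^ (α - 1)) ^ 2 := by
      rw [← Real.rpow_two, ← Real.rpow_mul ht₀.le]
      congr 1
      ring
    have hderiv := (((hasDerivAt_id t).const_mul (c ^ 2)).sub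
      ((hpow hα₀).const_mul (2 * c))).add (hpow hβ₀)
    refine (hderiv.congr_deriv ?_).hasDerivWithinAt
    rw [hsq]
    ring

/- This is Cauchy–Schwarz for `∫ t in a..b, α * t ^ (α - 1)`, read off from the discriminant of the
quadratic `c ↦ ∫ t in a..b, (c - t ^ (α - 1)) ^ 2`. -/
lemma sq_rpow_sub_rpow_le (ha : 0 ≤ a) (hb : 0 ≤ b) (hα : 1 / 2 < α) :
    (b ^ α - a ^ α) ^ 2 ≤
      α ^ 2 / (2 * α - 1) * ((b ^ (2 * α - 1) - a ^ (2 * α - 1)) * (b - a)) := by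
  wlog hab : a ≤ b generalizing a b
  · linarith [this hb ha (le_of_not_ge hab)]
  have hα₀ : 0 < α := by linarith
  have hquad (c : ℝ) : 0 ≤ (b - a) * (c * c) + -(2 * ((b ^ α - a ^ α) / α)) * c +
      (b ^ (2 * α - 1) - a ^ (2 * α - 1)) / (2 * α - 1) := by
    have hmono := monotoneOn_sq_mul_sub_rpow_add_rpow hα c ha hb hab
    simp only [sub_div] at hmono ⊢
    linarith
  have hdiscrim := discrim_le_zero hquad
  rw [discrim] at hdiscrim
  calc (b ^ α - a ^ α) ^ 2 = α ^ 2 * ((b ^ α - a ^ α) / α) ^ 2 := by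
        rw [div_pow, mul_div_cancel₀ _ (pow_ne_zero 2 hα₀.ne')]
    _ ≤ α ^ 2 * ((b - a) * ((b ^ (2 * α - 1) - a ^ (2 * α - 1)) / (2 * α - 1))) := by
      gcongr
      linarith
    _ = _ := by ring

lemma abs_sub_mul_rpow_add_rpow_le (ha : 0 ≤ a) (hb : 0 ≤ b) (hβ : 0 ≤ β) :
    |b - a| * (b ^ β + a ^ β) ≤ 2 * |b ^ (β + 1) - a ^ (β + 1)| := by
  wlog hab : a ≤ b generalizing a b
  · simpa only [abs_sub_comm, add_comm] using this hb ha (le_of_not_ge hab)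
  have hmono : a ^ β ≤ b ^ β := Real.rpow_le_rpow ha hab hβ
  have hmono' : a ^ (β + 1) ≤ b ^ (β + 1) := Real.rpow_le_rpow ha hab (by linarith)
  rw [abs_of_nonneg (sub_nonneg.2 hab), abs_of_nonneg (sub_nonneg.2 hmono'),
    Real.rpow_add_one' ha (by linarith), Real.rpow_add_one' hb (by linarith)]
  linarith [mul_nonneg (add_nonneg ha hb) (sub_nonneg.2 hmono)]

lemma abs_cross_term_le (ha : 0 ≤ a) (hb : 0 ≤ b) (hα : 1 / 2 ≤ α) (p q : ℝ) :
    |(q ^ 2 - p ^ 2) * ((b - a) * (b ^ (2 * α - 1) + a ^ (2 * α - 1)))| ≤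
      2 * |(p + q) * (b ^ α - a ^ α)| * |(q - p) * (a ^ α + b ^ α)| := by
  have hsq {t : ℝ} (ht : 0 ≤ t) : t ^ (2 * α - 1 + 1) = (t ^ α) ^ 2 := by
    rw [sub_add_cancel, mul_comm, Real.rpow_mul ht, Real.rpow_two]
  have hpow := abs_sub_mul_rpow_add_rpow_le ha hb (by linarith : 0 ≤ 2 * α - 1)
  rw [hsq ha, hsq hb] at hpow
  calc |(q ^ 2 - p ^ 2) * ((b - a) * (b ^ (2 * α - 1) + a ^ (2 * α - 1)))|
      = |q ^ 2 - p ^ 2| * (|b - a| * (b ^ (2 * α - 1) + a ^ (2 * α - 1))) := by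
        rw [abs_mul, abs_mul, abs_of_nonneg (by positivity : 0 ≤ b ^ (2 * α - 1) + _)]
    _ ≤ |q ^ 2 - p ^ 2| * (2 * |(b ^ α) ^ 2 - (a ^ α) ^ 2|) := by gcongr
    _ = _ := by
        simp only [sq_sub_sq, abs_mul, add_comm]
        ring

lemma edge_caccioppoli (ha : 0 ≤ a) (hb : 0 ≤ b) (hα : 1 / 2 < α) (p q : ℝ) :
    (p ^ 2 + q ^ 2) * (b ^ α - a ^ α) ^ 2 ≤
      4 * (α ^ 2 / (2 * α - 1)) *
          ((q ^ 2 * b ^ (2 * α - 1) - p ^ 2 * a ^ (2 * α - 1)) * (b - a)) +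
        16 * (α ^ 2 / (2 * α - 1)) ^ 2 * ((q - p) ^ 2 * ((a ^ α) ^ 2 + (b ^ α) ^ 2)) := by
  have hβ₀ : 0 < 2 * α - 1 := by linarith
  have hK : 0 ≤ α ^ 2 / (2 * α - 1) := by positivity
  have hdiag := mul_le_mul_of_nonneg_left (sq_rpow_sub_rpow_le ha hb hα)
    (by positivity : 0 ≤ p ^ 2 + q ^ 2)
  have hcross := mul_le_mul_of_nonneg_left
    ((neg_le_abs _).trans (abs_cross_term_le ha hb hα.le p q)) hK
  generalize α ^ 2 / (2 * α - 1) = K at *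
  generalize b ^ (2 * α - 1) = Q at *
  generalize a ^ (2 * α - 1) = P at *
  generalize b ^ α = y at *
  generalize a ^ α = x at *
  have hsplit : (p ^ 2 + q ^ 2) * ((Q - P) * (b - a)) =
      2 * ((q ^ 2 * Q - p ^ 2 * P) * (b - a)) - (q ^ 2 - p ^ 2) * ((b - a) * (Q + P)) := by
    ring
  rw [mul_left_comm, hsplit] at hdiag
  have hyoung : K * (2 * |(p + q) * (y - x)| * |(q - p) * (x + y)|) ≤
      1 / 4 * ((p + q) * (y - x)) ^ 2 + 4 * K ^ 2 * ((q - p) * (x + y)) ^ 2 := by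
    rw [← sq_abs ((p + q) * (y - x)), ← sq_abs ((q - p) * (x + y))]
    linarith [sq_nonneg (1 / 2 * |(p + q) * (y - x)| - 2 * K * |(q - p) * (x + y)|)]
  have hcutoff : ((p + q) * (y - x)) ^ 2 ≤ 2 * ((p ^ 2 + q ^ 2) * (y - x) ^ 2) := by
    linarith [sq_nonneg ((p - q) * (y - x))]
  have hgrad : K ^ 2 * ((q - p) * (x + y)) ^ 2 ≤
      2 * (K ^ 2 * ((q - p) ^ 2 * (x ^ 2 + y ^ 2))) := by
    linarith [sq_nonneg (K * ((q - p) * (x - y)))]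
  linarith

end Real

section Graph

variable {V : Type*} {G : SimpleGraph V} {nbr : V → Finset V} {ω : V → V → ℝ} {B : Finset V}

lemma nrmW_one (φ : V → ℝ) {f : V → ℝ} (hf : ∀ x ∈ B, 0 ≤ f x) :
    nrmW B 1 φ f = (B.card : ℝ)⁻¹ * ∑ x ∈ B, f x * φ x := by
  simp only [nrmW, one_div_one, Real.rpow_one]
  congr 1
  exact sum_congr rfl fun x hx => by rw [abs_of_nonneg (hf x hx)]

lemma isBounded_range_of_eq_zero {η : V → ℝ} (hout : ∀ x ∉ B, η x = 0) :
    Bornology.IsBounded (Set.range η) := by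
  refine (((B.finite_toSet.image η).insert 0).subset ?_).isBounded
  rintro _ ⟨x, rfl⟩
  by_cases hx : x ∈ B
  · exact Or.inr ⟨x, hx, rfl⟩
  · exact Or.inl (hout x hx)

lemma abs_sub_le_gradSup {η : V → ℝ} (hη : Bornology.IsBounded (Set.range η)) {x y : V}
    (hxy : G.Adj x y) : |η y - η x| ≤ gradSup G η := by
  refine le_csSup ⟨Metric.diam (Set.range η), ?_⟩ ⟨x, y, hxy, rfl⟩
  rintro _ ⟨v, w, -, rfl⟩
  exact Metric.dist_le_diam_of_mem hη ⟨w, rfl⟩ ⟨v, rfl⟩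

lemma mu_mul_lap (hω : ∀ x y, 0 ≤ ω x y) (u : V → ℝ) (x : V) :
    mu nbr ω x * lap nbr ω u x = ∑ y ∈ nbr x, ω x y * (u y - u x) := by
  by_cases hmu : mu nbr ω x = 0
  · have hzero := (sum_eq_zero_iff_of_nonneg fun y _ => hω x y).1 hmu
    rw [hmu, zero_mul, sum_eq_zero fun y hy => by rw [hzero y hy, zero_mul]]
  · rw [lap, mul_inv_cancel_left₀ hmu]

lemma sum_weight_le_mu (hω : ∀ x y, 0 ≤ ω x y) (hnbr : ∀ x, ∀ y ∉ nbr x, ω x y = 0)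
    (B : Finset V) (x : V) : ∑ y ∈ B, ω x y ≤ mu nbr ω x := by
  classical
  rw [← sum_subset (inter_subset_left : B ∩ nbr x ⊆ B) fun y hyB hy =>
    hnbr x y fun hyx => hy (mem_inter.2 ⟨hyB, hyx⟩)]
  exact sum_le_sum_of_subset_of_nonneg inter_subset_right fun y _ _ => hω x y

lemma cutoff_mul_weight_eq_zero (hzero : ∀ x y, ¬ G.Adj x y → ω x y = 0) {η : V → ℝ}
    (hout : ∀ x ∉ B, η x = 0) (hbdry : ∀ x ∈ intBdry G B, η x = 0) (x : V) {y : V}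
    (hy : y ∉ B) : η x * ω x y = 0 := by
  by_cases hxy : G.Adj x y
  · by_cases hx : x ∈ B
    · rw [hbdry x (by classical exact mem_filter.2 ⟨hx, y, hy, hxy⟩), zero_mul]
    · rw [hout x hx, zero_mul]
  · rw [hzero x y hxy, mul_zero]

lemma energySq_eq_sum {η : V → ℝ} (hout : ∀ x ∉ B, η x = 0)
    (hcut : ∀ x, ∀ y ∉ B, η x * ω x y = 0) (f : V → ℝ) :
    energySq ω η f = 1 / 2 * ∑ x ∈ B, ∑ y ∈ B, ω x y * (η x ^ 2 * (f y - f x) ^ 2) := by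
  rw [energySq, tsum_eq_sum (s := B) fun x hx => by simp [hout x hx]]
  congr 1
  refine sum_congr rfl fun x _ => ?_
  rw [tsum_eq_sum (s := B) fun y hy => by
    linear_combination η x * (f y - f x) ^ 2 * hcut x y hy]
  exact sum_congr rfl fun y _ => by ring

lemma sum_sum_symm_weight (hsymm : ∀ x y, ω x y = ω y x) (B : Finset V) (F : V → V → ℝ) :
    ∑ x ∈ B, ∑ y ∈ B, ω x y * (F x y + F y x) = 2 * ∑ x ∈ B, ∑ y ∈ B, ω x y * F x y := by
  have hswap : ∑ x ∈ B, ∑ y ∈ B, ω x y * F y x = ∑ x ∈ B, ∑ y ∈ B, ω x y * F x y := by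
    rw [sum_comm]
    exact sum_congr rfl fun x _ => sum_congr rfl fun y _ => by rw [hsymm]
  simp only [mul_add, sum_add_distrib, hswap]
  ring

lemma sum_sum_weight_mul_grad_mul_grad (hsymm : ∀ x y, ω x y = ω y x) (B : Finset V)
    (φ u : V → ℝ) :
    ∑ x ∈ B, ∑ y ∈ B, ω x y * ((φ y - φ x) * (u y - u x)) =
      -2 * ∑ x ∈ B, φ x * ∑ y ∈ B, ω x y * (u y - u x) := by
  calc ∑ x ∈ B, ∑ y ∈ B, ω x y * ((φ y - φ x) * (u y - u x))
      = ∑ x ∈ B, ∑ y ∈ B, ω x y * (-φ x * (u y - u x) + -φ y * (u x - u y)) :=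
        sum_congr rfl fun x _ => sum_congr rfl fun y _ => by ring
    _ = 2 * ∑ x ∈ B, ∑ y ∈ B, ω x y * (-φ x * (u y - u x)) :=
        sum_sum_symm_weight hsymm B fun x y => -φ x * (u y - u x)
    _ = _ := by
        simp only [mul_sum]
        exact sum_congr rfl fun x _ => sum_congr rfl fun y _ => by ring

lemma sum_sum_weight_mul_grad_mul_grad_nonpos (hsymm : ∀ x y, ω x y = ω y x)
    (hω : ∀ x y, 0 ≤ ω x y) (hnbr : ∀ x, ∀ y ∉ nbr x, ω x y = 0) {φ u : V → ℝ}
    (hφ : ∀ x ∈ B, 0 ≤ φ x) (hcut : ∀ x, ∀ y ∉ B, φ x * ω x y = 0)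
    (hlap : ∀ x ∈ B, 0 ≤ lap nbr ω u x) :
    ∑ x ∈ B, ∑ y ∈ B, ω x y * ((φ y - φ x) * (u y - u x)) ≤ 0 := by
  rw [sum_sum_weight_mul_grad_mul_grad hsymm]
  refine mul_nonpos_of_nonpos_of_nonneg (by norm_num) (sum_nonneg fun x hx => ?_)
  have hnbrs : φ x * ∑ y ∈ B, ω x y * (u y - u x) =
      φ x * ∑ y ∈ nbr x, ω x y * (u y - u x) := by
    rw [mul_sum, mul_sum]
    refine sum_congr_of_eq_on_inter (fun y _ hy => ?_) (fun y _ hy => ?_) fun _ _ _ => rfl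
    · rw [hnbr x y hy, zero_mul, mul_zero]
    · rw [← mul_assoc, hcut x y hy, zero_mul]
  rw [hnbrs, ← mu_mul_lap hω]
  exact mul_nonneg (hφ x hx) (mul_nonneg (sum_nonneg fun y _ => hω x y) (hlap x hx))

lemma energySq_rpow_le (hsymm : ∀ x y, ω x y = ω y x) (hω : ∀ x y, 0 ≤ ω x y)
    (hnbr : ∀ x, ∀ y ∉ nbr x, ω x y = 0) {η : V → ℝ} (hout : ∀ x ∉ B, η x = 0)
    (hcut : ∀ x, ∀ y ∉ B, η x * ω x y = 0) {u : V → ℝ} (hu : ∀ x ∈ B, 0 ≤ u x)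
    (hlap : ∀ x ∈ B, 0 ≤ lap nbr ω u x) {α : ℝ} (hα : 1 / 2 < α) :
    energySq ω η (fun x => u x ^ α) ≤ 8 * (α ^ 2 / (2 * α - 1)) ^ 2 *
      ∑ x ∈ B, ∑ y ∈ B, ω x y * ((η y - η x) ^ 2 * (u x ^ α) ^ 2) := by
  rw [energySq_eq_sum hout hcut]
  set φ : V → ℝ := fun x => η x ^ 2 * u x ^ (2 * α - 1)
  set K := α ^ 2 / (2 * α - 1)
  have htest : ∑ x ∈ B, ∑ y ∈ B, ω x y * ((φ y - φ x) * (u y - u x)) ≤ 0 :=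
    sum_sum_weight_mul_grad_mul_grad_nonpos hsymm hω hnbr
      (fun x hx => mul_nonneg (sq_nonneg _) (Real.rpow_nonneg (hu x hx) _))
      (fun x y hy => by linear_combination η x * u x ^ (2 * α - 1) * hcut x y hy) hlap
  have hK : 0 ≤ K := div_nonneg (sq_nonneg α) (by linarith)
  have hedge : ∀ x ∈ B, ∀ y ∈ B,
      ω x y * (η x ^ 2 * (u y ^ α - u x ^ α) ^ 2 + η y ^ 2 * (u x ^ α - u y ^ α) ^ 2) ≤
        4 * K * (ω x y * ((φ y - φ x) * (u y - u x))) + 16 * K ^ 2 *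
          (ω x y * ((η y - η x) ^ 2 * (u x ^ α) ^ 2 + (η x - η y) ^ 2 * (u y ^ α) ^ 2)) := by
    intro x hx y hy
    linarith [mul_le_mul_of_nonneg_left (edge_caccioppoli (hu x hx) (hu y hy) hα (η x) (η y))
      (hω x y)]
  have hsum := sum_le_sum fun x hx => sum_le_sum fun y hy => hedge x hx y hy
  simp only [sum_add_distrib, ← mul_sum] at hsum
  rw [sum_sum_symm_weight hsymm B fun x y => η x ^ 2 * (u y ^ α - u x ^ α) ^ 2,
    sum_sum_symm_weight hsymm B fun x y => (η y - η x) ^ 2 * (u x ^ α) ^ 2] at hsum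
  linarith [mul_nonpos_of_nonneg_of_nonpos hK htest]

lemma sum_sum_weight_mul_sq_grad_le (hω : ∀ x y, 0 ≤ ω x y)
    (hzero : ∀ x y, ¬ G.Adj x y → ω x y = 0) (hnbr : ∀ x, ∀ y ∉ nbr x, ω x y = 0) {η : V → ℝ}
    (hη : Bornology.IsBounded (Set.range η)) {f : V → ℝ} (hf : ∀ x ∈ B, 0 ≤ f x) :
    ∑ x ∈ B, ∑ y ∈ B, ω x y * ((η y - η x) ^ 2 * f x) ≤
      gradSup G η ^ 2 * ∑ x ∈ B, f x * mu nbr ω x := by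
  rw [mul_sum]
  refine sum_le_sum fun x hx => ?_
  have hedge (y : V) : ω x y * ((η y - η x) ^ 2 * f x) ≤ gradSup G η ^ 2 * f x * ω x y := by
    by_cases hxy : G.Adj x y
    · have hgrad : (η y - η x) ^ 2 ≤ gradSup G η ^ 2 :=
        sq_le_sq.2 ((abs_sub_le_gradSup hη hxy).trans (le_abs_self _))
      rw [mul_comm (ω x y)]
      gcongr
      exacts [hω x y, hf x hx]
    · simp only [hzero x y hxy, zero_mul, mul_zero, le_refl]
  calc ∑ y ∈ B, ω x y * ((η y - η x) ^ 2 * f x)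
      ≤ gradSup G η ^ 2 * f x * ∑ y ∈ B, ω x y := by
        rw [mul_sum]
        exact sum_le_sum fun y _ => hedge y
    _ ≤ gradSup G η ^ 2 * f x * mu nbr ω x :=
        mul_le_mul_of_nonneg_left (sum_weight_le_mu hω hnbr B x)
          (mul_nonneg (sq_nonneg _) (hf x hx))
    _ = _ := mul_assoc _ _ _

end Graph

end RCM

open RCM in
theorem energy_estimate_subharmonic_general {V : Type*} {G : SimpleGraph V}
    {nbr : V → Finset V} (hnbr : ∀ x y, y ∈ nbr x ↔ G.Adj x y) {ω : V → V → ℝ}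
    (hsymm : ∀ x y, ω x y = ω y x) (hω : ∀ x y, 0 ≤ ω x y)
    (hzero : ∀ x y, ¬ G.Adj x y → ω x y = 0) {B : Finset V} (hB : B.Nonempty) {η : V → ℝ}
    (hout : ∀ x ∉ B, η x = 0) (hbdry : ∀ x ∈ intBdry G B, η x = 0) {u : V → ℝ}
    (hu : ∀ x ∈ B, 0 ≤ u x) (hlap : ∀ x ∈ B, 0 ≤ lap nbr ω u x) {α : ℝ} (hα : 1 / 2 < α) :
    energySq ω η (fun x => u x ^ α) / (B.card : ℝ) ≤
      8 * (α ^ 4 / (2 * α - 1) ^ 2) * gradSup G η ^ 2 *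
        nrmW B 1 (mu nbr ω) (fun x => u x ^ (2 * α)) := by
  have hnbr' : ∀ x, ∀ y ∉ nbr x, ω x y = 0 := fun x y hy => hzero x y (mt (hnbr x y).2 hy)
  have hcard : (B.card : ℝ) ≠ 0 := Nat.cast_ne_zero.2 hB.card_ne_zero
  have hsq : ∀ x ∈ B, u x ^ (2 * α) = (u x ^ α) ^ 2 := fun x hx => by
    rw [mul_comm, Real.rpow_mul (hu x hx), Real.rpow_two]
  rw [nrmW_one _ fun x hx => Real.rpow_nonneg (hu x hx) _, div_le_iff₀ (by positivity),
    sum_congr rfl fun x hx => by rw [hsq x hx]]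
  calc energySq ω η (fun x => u x ^ α)
      ≤ 8 * (α ^ 2 / (2 * α - 1)) ^ 2 *
          ∑ x ∈ B, ∑ y ∈ B, ω x y * ((η y - η x) ^ 2 * (u x ^ α) ^ 2) :=
        energySq_rpow_le hsymm hω hnbr' hout
          (fun x _ hy => cutoff_mul_weight_eq_zero hzero hout hbdry x hy) hu hlap hα
    _ ≤ 8 * (α ^ 2 / (2 * α - 1)) ^ 2 *
          (gradSup G η ^ 2 * ∑ x ∈ B, (u x ^ α) ^ 2 * mu nbr ω x) := by
        gcongr
        exact sum_sum_weight_mul_sq_grad_le hω hzero hnbr' (isBounded_range_of_eq_zero hout)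
          fun x _ => sq_nonneg _
    _ = _ := by field_simp

open RCM in
/-- **Energy estimate for subharmonic functions** (Lemma 3.2). -/
theorem energy_estimate_subharmonic :
    ∃ C₂ : ℝ, 0 < C₂ ∧
      ∀ (V : Type) (G : SimpleGraph V) (nbr : V → Finset V)
        (_ : ∀ x y, y ∈ nbr x ↔ G.Adj x y)
        (ω : V → V → ℝ)
        (_ : ∀ x y, ω x y = ω y x)
        (_ : ∀ x y, G.Adj x y → 0 < ω x y)
        (_ : ∀ x y, ¬ G.Adj x y → ω x y = 0)
        (B : Finset V) (_ : (G.induce (B : Set V)).Connected)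
        (η : V → ℝ)
        (_ : ∀ x ∉ B, η x = 0)
        (_ : ∀ x, 0 ≤ η x ∧ η x ≤ 1)
        (_ : ∀ x ∈ intBdry G B, η x = 0)
        (u : V → ℝ) (_ : ∀ x, 0 < u x)
        (_ : ∀ x ∈ B, 0 ≤ lap nbr ω u x)
        (α : ℝ) (_ : 1 ≤ α),
        energySq ω η (fun x => u x ^ α) / (B.card : ℝ) ≤
          C₂ * (α ^ 4 / (2 * α - 1) ^ 2) * gradSup G η ^ 2 *
            nrmW B 1 (mu nbr ω) (fun x => u x ^ (2 * α)) :=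
  ⟨8, by norm_num, fun V G nbr hnbr ω hsymm hpos hzero B hB η hout _ hbdry u hu hlap α hα =>
    energy_estimate_subharmonic_general hnbr hsymm
      (fun x y => (em (G.Adj x y)).elim (fun h => (hpos x y h).le) fun h => (hzero x y h).ge) hzero
      (coe_nonempty.1 (Set.nonempty_coe_sort.1 hB.nonempty)) hout hbdry (fun x _ => (hu x).le)
      hlap (by linarith)⟩
end
end
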